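/- Pólya–Szegő inequality for anisotropic Hessian integrals: let Ω ⊂ ℝ² be a bounded convex open set with C² boundary and let u ∈ Φ₀(Ω) ∩ C²(E_u). Then I_H[u,Ω] ≥ I_H[u^★, Ω^★], i.e. ∫_Ω u det_H[u] dx ≥ 4κ³ ∫₀^{P_H(Ω)} |(u^♦)'(s)|³ ds. -/

import Mathlib

open MeasureTheory Set
open scoped ENNReal NNReal RealInnerProductSpace

noncomputable section

/-- The plane `ℝ²`. -/
abbrev E2 : Type := EuclideanSpace ℝ (Fin 2)

/-- The `i`-th partial derivative of `f` at `x`. -/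
def pd (f : E2 → ℝ) (i : Fin 2) (x : E2) : ℝ :=
  fderiv ℝ f x (EuclideanSpace.single i 1)

/-- The Hessian matrix of `f` at `x`. -/
def hessian (f : E2 → ℝ) (x : E2) : Matrix (Fin 2) (Fin 2) ℝ :=
  Matrix.of fun i j => pd (pd f j) i x

/-- The hypotheses on the anisotropy `H`: a convex, coercive, positively `1`-homogeneous even
function, with `H²` strongly convex and `C²` away from the origin. -/
structure IsAnisoNorm (H : E2 → ℝ) : Prop where
  nonneg : ∀ ξ, 0 ≤ H ξ
  convex : ConvexOn ℝ Set.univ H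
  coercive : ∃ α > 0, ∀ ξ, α * ‖ξ‖ ≤ H ξ
  homog : ∀ (t : ℝ) (ξ : E2), H (t • ξ) = |t| * H ξ
  smooth : ContDiffOn ℝ 2 H {(0 : E2)}ᶜ
  posdef : ∀ ξ : E2, ξ ≠ 0 → ∀ v : E2, v ≠ 0 →
      0 < ∑ i, ∑ j, hessian (fun z => H z ^ 2) ξ i j * v i * v j

/-- The polar function `H^o(v) = sup_{ξ ≠ 0} (ξ·v)/H(ξ)`. -/
def polar (H : E2 → ℝ) (v : E2) : ℝ :=
  ⨆ ξ : {ξ : E2 // ξ ≠ 0}, ⟪(ξ : E2), v⟫ / H ξ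

/-- The Wulff shape `𝒲 = {H^o < 1}`. -/
def Wulff (H : E2 → ℝ) : Set E2 := {ξ | polar H ξ < 1}

/-- The scaled Wulff shape `𝒲_R = {H^o < R}`. -/
def wulffR (H : E2 → ℝ) (R : ℝ) : Set E2 := {ξ | polar H ξ < R}

/-- `κ`, the Lebesgue measure of the Wulff shape. -/
def kappa (H : E2 → ℝ) : ℝ := (volume (Wulff H)).toReal

/-- `F(ξ) = H(ξ)²/2`. -/
def Fani (H : E2 → ℝ) (ξ : E2) : ℝ := H ξ ^ 2 / 2

/-- The matrix `A[u] = ∇²_ξ F(∇u) · ∇²u`. -/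
def Amat (H u : E2 → ℝ) (x : E2) : Matrix (Fin 2) (Fin 2) ℝ :=
  hessian (Fani H) (gradient u x) * hessian u x

/-- The anisotropic Monge–Ampère operator `det_H[u] = det ∇²_ξF(∇u) · det ∇²u`. -/
def detH (H u : E2 → ℝ) (x : E2) : ℝ :=
  (hessian (Fani H) (gradient u x)).det * (hessian u x).det

/-- The cofactor matrix of a `2×2` matrix. -/
def cof (B : Matrix (Fin 2) (Fin 2) ℝ) : Matrix (Fin 2) (Fin 2) ℝ :=
  Matrix.of ![![B 1 1, -B 1 0], ![-B 0 1, B 0 0]]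

/-- The anisotropic curvature of the level line of `u` through `x`:
`k_H(x) = -Σ_{i,j} H_{ξ_iξ_j}(∇u) u_{ij}`. -/
def kH (H u : E2 → ℝ) (x : E2) : ℝ :=
  -∑ i, ∑ j, hessian H (gradient u x) i j * hessian u x i j

/-- The class `Φ₀(Ω)`: `W^{2,2}(Ω) ∩ C¹(Ω̄)` functions vanishing on `∂Ω`, concave in `Ω`. -/
structure MemPhi0 (Ω : Set E2) (u : E2 → ℝ) : Prop where
  sobolev : ∀ i j, MemLp (fun x => hessian u x i j) 2 (volume.restrict Ω)
  c1 : ContDiffOn ℝ 1 u (closure Ω)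
  bzero : ∀ x ∈ frontier Ω, u x = 0
  concave : ConcaveOn ℝ Ω u

/-- `max_{Ω̄} u`. -/
def maxcl (Ω : Set E2) (u : E2 → ℝ) : ℝ := sSup (u '' closure Ω)

/-- The set `E_u = {x ∈ Ω : 0 ≤ u(x) < max_{Ω̄} u}`. -/
def Eu (Ω : Set E2) (u : E2 → ℝ) : Set E2 :=
  {x ∈ Ω | 0 ≤ u x ∧ u x < maxcl Ω u}

/-- `K` has `C²` boundary: it admits a global `C²` defining function with nonvanishing
gradient on the boundary. -/
def HasC2Boundary (K : Set E2) : Prop :=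
  ∃ φ : E2 → ℝ, ContDiff ℝ 2 φ ∧ K = {x | φ x < 0} ∧
    frontier K = {x | φ x = 0} ∧ ∀ x ∈ frontier K, gradient φ x ≠ 0

/-- `K` has `C¹` boundary. -/
def HasC1Boundary (K : Set E2) : Prop :=
  ∃ φ : E2 → ℝ, ContDiff ℝ 1 φ ∧ K = {x | φ x < 0} ∧
    frontier K = {x | φ x = 0} ∧ ∀ x ∈ frontier K, gradient φ x ≠ 0

/-- The Euclidean outer unit normal `ν = -∇u/|∇u|` to a superlevel set of `u`. -/
def nuLevel (u : E2 → ℝ) (x : E2) : E2 := -(‖gradient u x‖⁻¹ • gradient u x)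

/-- The level set `Σ_t = {u = t}` (in `Ω̄`). -/
def levelSet (Ω : Set E2) (u : E2 → ℝ) (t : ℝ) : Set E2 :=
  {x ∈ closure Ω | u x = t}

/-- The superlevel set `Ω_t = {u > t}`. -/
def superLevel (Ω : Set E2) (u : E2 → ℝ) (t : ℝ) : Set E2 :=
  {x ∈ Ω | t < u x}

/-- `λ_H(t) = P_H({u > t}) = ∫_{{u = t}} H(ν) dℋ¹`. -/
def lambdaH (H : E2 → ℝ) (Ω : Set E2) (u : E2 → ℝ) (t : ℝ) : ℝ :=
  ∫ x in levelSet Ω u t, H (nuLevel u x) ∂(μH[1] : Measure E2)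

/-- The anisotropic perimeter `P_H(Ω) = λ_H(0)` of `Ω = {u > 0}`. -/
def PerH (H : E2 → ℝ) (Ω : Set E2) (u : E2 → ℝ) : ℝ := lambdaH H Ω u 0

/-- The rearrangement `u^♦(s) = sup{t ≥ 0 : λ_H(t) ≥ s}` of `u` with respect to the
anisotropic perimeter. -/
def diamondRe (H : E2 → ℝ) (Ω : Set E2) (u : E2 → ℝ) (s : ℝ) : ℝ :=
  sSup {t : ℝ | 0 ≤ t ∧ s ≤ lambdaH H Ω u t}

/-- The anisotropic radial symmetrand `u^★(x) = u^♦(2κ H^o(x))`. -/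
def starRe (H : E2 → ℝ) (Ω : Set E2) (u : E2 → ℝ) (x : E2) : ℝ :=
  diamondRe H Ω u (2 * kappa H * polar H x)

/-- `Ω^★ = 𝒲_R` with `R = P_H(Ω)/(2κ)`. -/
def OmegaStar (H : E2 → ℝ) (Ω : Set E2) (u : E2 → ℝ) : Set E2 :=
  wulffR H (PerH H Ω u / (2 * kappa H))

/-- The distribution function `μ(t) = |{x ∈ Ω : |f(x)| > t}|`. -/
def distrib (Ω : Set E2) (f : E2 → ℝ) (t : ℝ) : ℝ :=
  (volume {x ∈ Ω | t < |f x|}).toReal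

/-- The decreasing rearrangement `f*(s) = sup{t : μ(t) > s}`. -/
def decRe (Ω : Set E2) (f : E2 → ℝ) (s : ℝ) : ℝ :=
  sSup {t : ℝ | s < distrib Ω f t}

/-! ### Elementary facts about the plane and the anisotropy -/

/-- unit vector of angle `θ`. -/
def ev (θ : ℝ) : E2 := !₂[Real.cos θ, Real.sin θ]

/-- derivative of `ev`. -/
def ev' (θ : ℝ) : E2 := !₂[-Real.sin θ, Real.cos θ]

@[simp] lemma ev_0 (θ : ℝ) : ev θ 0 = Real.cos θ := rfl
@[simp] lemma ev_1 (θ : ℝ) : ev θ 1 = Real.sin θ := rfl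
@[simp] lemma evp_0 (θ : ℝ) : ev' θ 0 = -Real.sin θ := rfl
@[simp] lemma evp_1 (θ : ℝ) : ev' θ 1 = Real.cos θ := rfl

lemma inner2 (x y : E2) : ⟪x, y⟫ = x 0 * y 0 + x 1 * y 1 := by
  simp [PiLp.inner_apply, Fin.sum_univ_two, mul_comm]

lemma normsq2 (x : E2) : ‖x‖ ^ 2 = x 0 ^ 2 + x 1 ^ 2 := by
  rw [← real_inner_self_eq_norm_sq, inner2]; ring

lemma ext2 {x y : E2} (h0 : x 0 = y 0) (h1 : x 1 = y 1) : x = y := by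
  ext i; fin_cases i
  · exact h0
  · exact h1

lemma norm_ev (θ : ℝ) : ‖ev θ‖ = 1 := by
  have h := normsq2 (ev θ)
  simp only [ev_0, ev_1, Real.cos_sq_add_sin_sq] at h
  nlinarith [norm_nonneg (ev θ)]

lemma ev_ne (θ : ℝ) : ev θ ≠ 0 := by
  intro h; have := norm_ev θ; rw [h] at this; simp at this

lemma ev_add_pi (θ : ℝ) : ev (θ + Real.pi) = - ev θ := by
  apply ext2 <;> simp

lemma contDiff_ev : ContDiff ℝ 2 ev := by
  rw [contDiff_euclidean]
  intro i; fin_cases i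
  · exact Real.contDiff_cos
  · exact Real.contDiff_sin

lemma hasDerivAt_ev (θ : ℝ) : HasDerivAt ev (ev' θ) θ := by
  have h : HasDerivAt (fun θ : ℝ => ![Real.cos θ, Real.sin θ]) ![-Real.sin θ, Real.cos θ] θ := by
    rw [hasDerivAt_pi]
    intro i; fin_cases i
    · exact Real.hasDerivAt_cos θ
    · exact Real.hasDerivAt_sin θ
  exact ((PiLp.continuousLinearEquiv 2 ℝ (fun _ : Fin 2 => ℝ)).symm.hasFDerivAt).comp_hasDerivAt θ h

lemma continuous_ev' : Continuous ev' := by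
  unfold ev'
  fun_prop

lemma exists_polar (x : E2) : ∃ θ ∈ Icc (-Real.pi) Real.pi, x = ‖x‖ • ev θ := by
  refine ⟨Complex.arg ⟨x 0, x 1⟩, Ioc_subset_Icc_self (Complex.arg_mem_Ioc _), ?_⟩
  have hn : ‖(⟨x 0, x 1⟩ : ℂ)‖ = ‖x‖ := by
    have h1 := normsq2 x
    have h2 := Complex.sq_norm (⟨x 0, x 1⟩ : ℂ)
    rw [Complex.normSq_mk] at h2
    have : ‖(⟨x 0, x 1⟩ : ℂ)‖ ^ 2 = ‖x‖ ^ 2 := by rw [h1, h2]; ring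
    exact (pow_left_inj₀ (norm_nonneg _) (norm_nonneg _) two_ne_zero).1 this
  have hc := Complex.norm_mul_cos_arg (⟨x 0, x 1⟩ : ℂ)
  have hs := Complex.norm_mul_sin_arg (⟨x 0, x 1⟩ : ℂ)
  rw [hn] at hc hs
  apply ext2
  · simpa using hc.symm
  · simpa using hs.symm

lemma fderiv_eq_pd (f : E2 → ℝ) (x v : E2) :
    fderiv ℝ f x v = pd f 0 x * v 0 + pd f 1 x * v 1 := by
  have hv : v = v 0 • EuclideanSpace.single (0 : Fin 2) (1 : ℝ) +
      v 1 • EuclideanSpace.single (1 : Fin 2) (1 : ℝ) := by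
    apply ext2 <;> simp
  conv_lhs => rw [hv]
  rw [map_add, map_smul, map_smul]
  simp only [pd, smul_eq_mul]; ring

lemma contDiffOn_pd {f : E2 → ℝ} {s : Set E2} (hs : IsOpen s) (hf : ContDiffOn ℝ 2 f s)
    (i : Fin 2) : ContDiffOn ℝ 1 (pd f i) s := by
  have h := hf.fderiv_of_isOpen hs (m := 1) (by norm_num)
  exact h.clm_apply contDiffOn_const

lemma fderiv_smul_aux (f : E2 → ℝ) (c : ℝ) (x : E2) :
    fderiv ℝ (fun y => c • f y) x = c • fderiv ℝ f x := by
  have := congrFun (fderiv_const_smul_field (𝕜 := ℝ) (f := f) c) x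
  exact this

section Hfacts

variable {H : E2 → ℝ}

lemma H_zero (hH : IsAnisoNorm H) : H 0 = 0 := by
  have := hH.homog 0 0; simpa using this

lemma H_pos (hH : IsAnisoNorm H) {ξ : E2} (h : ξ ≠ 0) : 0 < H ξ := by
  obtain ⟨α, hα, h'⟩ := hH.coercive
  exact lt_of_lt_of_le (mul_pos hα (norm_pos_iff.2 h)) (h' ξ)

lemma H_neg (hH : IsAnisoNorm H) (ξ : E2) : H (-ξ) = H ξ := by
  have := hH.homog (-1) ξ; simpa using this

lemma H_cont (hH : IsAnisoNorm H) : Continuous H :=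
  (hH.convex.locallyLipschitz).continuous

lemma F_smooth (hH : IsAnisoNorm H) : ContDiffOn ℝ 2 (Fani H) {(0 : E2)}ᶜ := by
  unfold Fani
  exact (hH.smooth.pow 2).div_const 2

lemma F_homog (hH : IsAnisoNorm H) (r : ℝ) (x : E2) : Fani H (r • x) = r ^ 2 * Fani H x := by
  unfold Fani; rw [hH.homog, mul_pow, sq_abs]; ring

lemma pdF_homog (hH : IsAnisoNorm H) {r : ℝ} (hr : r ≠ 0) (i : Fin 2) (x : E2) :
    pd (Fani H) i (r • x) = r * pd (Fani H) i x := by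
  have h1 : fderiv ℝ (fun y => Fani H (r • y)) x = r • fderiv ℝ (Fani H) (r • x) :=
    fderiv_comp_smul r
  have h2 : (fun y => Fani H (r • y)) = fun y => r ^ 2 • Fani H y := by
    ext y; rw [F_homog hH, smul_eq_mul]
  rw [h2, fderiv_smul_aux] at h1
  have h3 := congrArg (fun L => L (EuclideanSpace.single i 1)) h1
  simp only [smul_apply, smul_eq_mul] at h3
  unfold pd
  have : r * (fderiv ℝ (Fani H) (r • x) (EuclideanSpace.single i 1)) =
    r * (r * fderiv ℝ (Fani H) x (EuclideanSpace.single i 1)) := by rw [← h3]; ring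
  exact mul_left_cancel₀ hr this

lemma pdpdF_homog (hH : IsAnisoNorm H) {r : ℝ} (hr : r ≠ 0) (i j : Fin 2) (x : E2) :
    pd (pd (Fani H) j) i (r • x) = pd (pd (Fani H) j) i x := by
  have h1 : fderiv ℝ (fun y => pd (Fani H) j (r • y)) x = r • fderiv ℝ (pd (Fani H) j) (r • x) :=
    fderiv_comp_smul r
  have h2 : (fun y => pd (Fani H) j (r • y)) = fun y => r • pd (Fani H) j y := by
    ext y; rw [pdF_homog hH hr, smul_eq_mul]
  rw [h2, fderiv_smul_aux] at h1
  have h3 := congrArg (fun L => L (EuclideanSpace.single i 1)) h1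
  simp only [smul_apply, smul_eq_mul] at h3
  unfold pd at h3 ⊢
  exact (mul_left_cancel₀ hr h3).symm

lemma hessF_homog (hH : IsAnisoNorm H) {r : ℝ} (hr : r ≠ 0) (x : E2) :
    hessian (Fani H) (r • x) = hessian (Fani H) x := by
  ext i j; simp only [hessian, Matrix.of_apply]; exact pdpdF_homog hH hr i j x

/-- `H` as a function of the angle. -/
def cH (H : E2 → ℝ) (θ : ℝ) : ℝ := H (ev θ)

/-- The curvature radius `c + c''`. -/
def qH (H : E2 → ℝ) (θ : ℝ) : ℝ := cH H θ + deriv (deriv (cH H)) θ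

lemma cH_pos (hH : IsAnisoNorm H) (θ : ℝ) : 0 < cH H θ := H_pos hH (ev_ne θ)

lemma cH_smooth (hH : IsAnisoNorm H) : ContDiff ℝ 2 (cH H) := by
  have := hH.smooth.comp (contDiff_ev.contDiffOn (s := univ)) (fun θ _ => ev_ne θ)
  exact contDiffOn_univ.1 this

lemma cH_deriv (hH : IsAnisoNorm H) (θ : ℝ) : HasDerivAt (cH H) (deriv (cH H) θ) θ :=
  ((cH_smooth hH).differentiable (by norm_num)).differentiableAt.hasDerivAt

lemma cH_deriv_smooth (hH : IsAnisoNorm H) : ContDiff ℝ 1 (deriv (cH H)) :=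
  ((contDiff_succ_iff_deriv (n := 1)).1 ((cH_smooth hH).of_le (by norm_num))).2.2

lemma cH_deriv2 (hH : IsAnisoNorm H) (θ : ℝ) :
    HasDerivAt (deriv (cH H)) (deriv (deriv (cH H)) θ) θ :=
  ((cH_deriv_smooth hH).differentiable (by norm_num)).differentiableAt.hasDerivAt

lemma cH_cont (hH : IsAnisoNorm H) : Continuous (cH H) := (cH_smooth hH).continuous

lemma qH_cont (hH : IsAnisoNorm H) : Continuous (qH H) :=
  (cH_cont hH).add ((cH_deriv_smooth hH).continuous_deriv (by norm_num))

lemma cH_periodic (hH : IsAnisoNorm H) : Function.Periodic (cH H) Real.pi := by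
  intro θ; simp only [cH]; rw [ev_add_pi, H_neg hH]

lemma qH_periodic (hH : IsAnisoNorm H) : Function.Periodic (qH H) Real.pi := by
  have h0 := cH_periodic hH
  have h1 : Function.Periodic (deriv (cH H)) Real.pi := by
    intro θ
    rw [← deriv_comp_add_const]; congr 1; funext y; exact h0 y
  have h2 : Function.Periodic (deriv (deriv (cH H))) Real.pi := by
    intro θ
    rw [← deriv_comp_add_const]; congr 1; funext y; exact h1 y
  exact h0.add h2

lemma detF_ev (hH : IsAnisoNorm H) (θ : ℝ) :
    (hessian (Fani H) (ev θ)).det = cH H θ ^ 3 * qH H θ := by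
  have hopen : IsOpen ({(0 : E2)}ᶜ) := isOpen_compl_singleton
  have hFd : ∀ x : E2, x ≠ 0 → DifferentiableAt ℝ (Fani H) x := fun x hx =>
    ((F_smooth hH).contDiffAt (hopen.mem_nhds hx)).differentiableAt (by norm_num)
  have hGd : ∀ (j : Fin 2) (x : E2), x ≠ 0 → DifferentiableAt ℝ (pd (Fani H) j) x := fun j x hx =>
    ((contDiffOn_pd hopen (F_smooth hH) j).contDiffAt (hopen.mem_nhds hx)).differentiableAt
      (by norm_num)
  -- derivatives along the circle
  have hsm : ∀ x : E2, HasDerivAt (fun s : ℝ => s • x) x 1 := fun x => by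
    simpa using (hasDerivAt_id (1 : ℝ)).smul_const x
  -- Euler for F
  have eulF : ∀ φ, pd (Fani H) 0 (ev φ) * Real.cos φ + pd (Fani H) 1 (ev φ) * Real.sin φ
      = cH H φ ^ 2 := by
    intro φ
    have h1 : HasDerivAt (fun s : ℝ => Fani H (s • ev φ)) (fderiv ℝ (Fani H) (ev φ) (ev φ)) 1 := by
      have := (hFd (ev φ) (ev_ne φ)).hasFDerivAt
      have h2 : HasFDerivAt (Fani H) (fderiv ℝ (Fani H) (ev φ)) ((1 : ℝ) • ev φ) := by
        simpa using this
      exact h2.comp_hasDerivAt (1 : ℝ) (hsm _)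
    have h2 : HasDerivAt (fun s : ℝ => Fani H (s • ev φ)) (2 * Fani H (ev φ)) 1 := by
      have : (fun s : ℝ => Fani H (s • ev φ)) = fun s => s ^ 2 * Fani H (ev φ) := by
        funext s; exact F_homog hH _ _
      rw [this]
      simpa using (hasDerivAt_pow 2 (1 : ℝ)).mul_const (Fani H (ev φ))
    have h3 := h1.unique h2
    rw [fderiv_eq_pd] at h3
    simp only [ev_0, ev_1] at h3
    rw [h3]; simp only [Fani, cH]; ring
  have tanF : ∀ φ, -pd (Fani H) 0 (ev φ) * Real.sin φ + pd (Fani H) 1 (ev φ) * Real.cos φ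
      = cH H φ * deriv (cH H) φ := by
    intro φ
    have h1 : HasDerivAt (fun s : ℝ => Fani H (ev s)) (fderiv ℝ (Fani H) (ev φ) (ev' φ)) φ :=
      (hFd (ev φ) (ev_ne φ)).hasFDerivAt.comp_hasDerivAt φ (hasDerivAt_ev φ)
    have h2 : HasDerivAt (fun s : ℝ => Fani H (ev s)) (cH H φ * deriv (cH H) φ) φ := by
      exact (((cH_deriv hH φ).pow 2).div_const 2).congr_deriv (by norm_num; ring)
    have h3 := h1.unique h2
    rw [fderiv_eq_pd] at h3
    simp only [evp_0, evp_1] at h3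
    linarith
  have G0 : ∀ φ, pd (Fani H) 0 (ev φ) =
      cH H φ * (cH H φ * Real.cos φ - deriv (cH H) φ * Real.sin φ) := by
    intro φ
    have hcs := Real.sin_sq_add_cos_sq φ
    linear_combination Real.cos φ * eulF φ - Real.sin φ * tanF φ
      - pd (Fani H) 0 (ev φ) * hcs
  have G1 : ∀ φ, pd (Fani H) 1 (ev φ) =
      cH H φ * (cH H φ * Real.sin φ + deriv (cH H) φ * Real.cos φ) := by
    intro φ
    have hcs := Real.sin_sq_add_cos_sq φ
    linear_combination Real.sin φ * eulF φ + Real.cos φ * tanF φ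
      - pd (Fani H) 1 (ev φ) * hcs
  have eulG : ∀ j : Fin 2, pd (pd (Fani H) j) 0 (ev θ) * Real.cos θ +
      pd (pd (Fani H) j) 1 (ev θ) * Real.sin θ = pd (Fani H) j (ev θ) := by
    intro j
    have h1 : HasDerivAt (fun s : ℝ => pd (Fani H) j (s • ev θ))
        (fderiv ℝ (pd (Fani H) j) (ev θ) (ev θ)) 1 := by
      have := (hGd j (ev θ) (ev_ne θ)).hasFDerivAt
      have h2 : HasFDerivAt (pd (Fani H) j) (fderiv ℝ (pd (Fani H) j) (ev θ)) ((1 : ℝ) • ev θ) := by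
        simpa using this
      exact h2.comp_hasDerivAt (1 : ℝ) (hsm _)
    have h2 : HasDerivAt (fun s : ℝ => pd (Fani H) j (s • ev θ)) (pd (Fani H) j (ev θ)) 1 := by
      have h3 : HasDerivAt (fun s : ℝ => s * pd (Fani H) j (ev θ)) (pd (Fani H) j (ev θ)) 1 := by
        simpa using (hasDerivAt_id (1 : ℝ)).mul_const (pd (Fani H) j (ev θ))
      refine h3.congr_of_eventuallyEq ?_
      filter_upwards [eventually_ne_nhds (one_ne_zero : (1 : ℝ) ≠ 0)] with s hs
      exact pdF_homog hH hs j _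
    have h3 := h1.unique h2
    rw [fderiv_eq_pd] at h3
    simpa only [ev_0, ev_1] using h3
  have tanG : ∀ j : Fin 2, HasDerivAt (fun s => pd (Fani H) j (ev s))
      (-pd (pd (Fani H) j) 0 (ev θ) * Real.sin θ + pd (pd (Fani H) j) 1 (ev θ) * Real.cos θ) θ := by
    intro j
    have h1 : HasDerivAt (fun s : ℝ => pd (Fani H) j (ev s))
        (fderiv ℝ (pd (Fani H) j) (ev θ) (ev' θ)) θ :=
      (hGd j (ev θ) (ev_ne θ)).hasFDerivAt.comp_hasDerivAt θ (hasDerivAt_ev θ)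
    rw [fderiv_eq_pd] at h1
    simp only [evp_0, evp_1] at h1
    convert h1 using 1; ring
  have d0 := (cH_deriv hH θ).mul (((cH_deriv hH θ).mul (Real.hasDerivAt_cos θ)).sub
    ((cH_deriv2 hH θ).mul (Real.hasDerivAt_sin θ)))
  have d1 := (cH_deriv hH θ).mul (((cH_deriv hH θ).mul (Real.hasDerivAt_sin θ)).add
    ((cH_deriv2 hH θ).mul (Real.hasDerivAt_cos θ)))
  have t0 := tanG 0
  have t1 := tanG 1
  rw [show (fun s => pd (Fani H) 0 (ev s)) = _ from funext G0] at t0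
  rw [show (fun s => pd (Fani H) 1 (ev s)) = _ from funext G1] at t1
  have k0 := t0.unique d0
  have k1 := t1.unique d1
  have e0 := eulG 0
  have e1 := eulG 1
  rw [G0] at e0
  rw [G1] at e1
  have hcs := Real.sin_sq_add_cos_sq θ
  simp only [Pi.mul_apply, Pi.sub_apply, Pi.add_apply] at k0 k1
  rw [Matrix.det_fin_two]
  simp only [hessian, Matrix.of_apply, qH]
  generalize pd (pd (Fani H) 0) 0 (ev θ) = a at *
  generalize pd (pd (Fani H) 0) 1 (ev θ) = b at *
  generalize pd (pd (Fani H) 1) 0 (ev θ) = d at *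
  generalize pd (pd (Fani H) 1) 1 (ev θ) = f at *
  generalize deriv (deriv (cH H)) θ = z at *
  generalize deriv (cH H) θ = y at *
  generalize cH H θ = x at *
  generalize Real.sin θ = s at *
  generalize Real.cos θ = c at *
  clear t0 t1 d0 d1 tanG eulG G0 G1 tanF eulF hsm hGd hFd hopen
  have key : (a * c + b * s) * (-d * s + f * c) - (d * c + f * s) * (-a * s + b * c)
      = (a * f - d * b) * (s ^ 2 + c ^ 2) := by ring
  rw [hcs, mul_one] at key
  rw [← key, e0, e1, k0, k1]
  have hs : s ^ 2 = 1 - c ^ 2 := by linarith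
  ring_nf
  simp only [hs]
  ring

lemma detF_polar (hH : IsAnisoNorm H) {r : ℝ} (hr : r ≠ 0) (θ : ℝ) :
    (hessian (Fani H) (r • ev θ)).det = cH H θ ^ 3 * qH H θ := by
  rw [hessF_homog hH hr, detF_ev hH]

lemma det_pos_of_form {a b c d : ℝ} (h : ∀ x y : ℝ, (x ≠ 0 ∨ y ≠ 0) →
    0 < a * x * x + b * x * y + (c * y * x + d * y * y)) : 0 < a * d - b * c := by
  have ha := h 1 0 (Or.inl one_ne_zero)
  have h2 := h (-(b + c)) (2 * a) (Or.inr (by simp at ha; linarith))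
  simp at ha
  have h3 : 0 < a * (4 * a * d - (b + c) ^ 2) := by nlinarith
  have h4 : 0 < 4 * a * d - (b + c) ^ 2 := by
    by_contra hc; push Not at hc; nlinarith
  nlinarith [sq_nonneg (b - c)]

lemma pd_half (f : E2 → ℝ) (i : Fin 2) (x : E2) : pd (fun z => f z / 2) i x = pd f i x / 2 := by
  have h : (fun z => f z / 2) = fun z => (2⁻¹ : ℝ) • f z := by
    funext z; rw [smul_eq_mul]; ring
  unfold pd
  rw [h, fderiv_smul_aux]
  simp; ring

lemma detF_pos (hH : IsAnisoNorm H) {x : E2} (hx : x ≠ 0) :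
    0 < (hessian (Fani H) x).det := by
  have hF : ∀ i j, hessian (Fani H) x i j = hessian (fun z => H z ^ 2) x i j / 2 := by
    intro i j
    simp only [hessian, Matrix.of_apply]
    have : pd (Fani H) j = fun z => pd (fun z => H z ^ 2) j z / 2 := by
      funext z; unfold Fani; exact pd_half _ _ _
    rw [this, pd_half]
  have := det_pos_of_form (a := hessian (fun z => H z ^ 2) x 0 0)
    (b := hessian (fun z => H z ^ 2) x 0 1) (c := hessian (fun z => H z ^ 2) x 1 0)
    (d := hessian (fun z => H z ^ 2) x 1 1) (by
      intro p q hpq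
      have := hH.posdef x hx !₂[p, q] (by
        intro h
        have h0 := congrArg (fun v : E2 => v 0) h
        have h1 := congrArg (fun v : E2 => v 1) h
        simp at h0 h1
        tauto)
      simpa [Fin.sum_univ_two] using this)
  rw [Matrix.det_fin_two]
  simp only [hF]
  linarith

lemma qH_pos (hH : IsAnisoNorm H) (θ : ℝ) : 0 < qH H θ := by
  have h := detF_pos hH (ev_ne θ)
  rw [detF_ev hH] at h
  exact (pos_iff_pos_of_mul_pos h).1 (pow_pos (cH_pos hH θ) 3)

lemma zonoid_ev (hH : IsAnisoNorm H) (φ : ℝ) :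
    ∫ θ in (-Real.pi)..Real.pi, |⟪ev φ, ev' θ⟫| * qH H θ = 4 * cH H φ := by
  have hin : ∀ θ, ⟪ev φ, ev' θ⟫ = - Real.sin (θ - φ) := by
    intro θ; rw [inner2, Real.sin_sub]; simp; ring
  simp only [hin, abs_neg]
  have hper : Function.Periodic (fun θ => |Real.sin (θ - φ)| * qH H θ) Real.pi := by
    intro θ
    simp only [qH_periodic hH θ]
    rw [show θ + Real.pi - φ = (θ - φ) + Real.pi by ring, Real.sin_add_pi, abs_neg]
  have hcont : Continuous (fun θ => |Real.sin (θ - φ)| * qH H θ) :=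
    (by fun_prop : Continuous fun θ => |Real.sin (θ - φ)|).mul (qH_cont hH)
  have hone : ∀ t, ∫ θ in t..(t + Real.pi), |Real.sin (θ - φ)| * qH H θ = 2 * cH H φ := by
    intro t
    rw [hper.intervalIntegral_add_eq t φ]
    have hd : ∀ θ ∈ uIcc φ (φ + Real.pi), HasDerivAt
        (fun θ => Real.sin (θ - φ) * deriv (cH H) θ - Real.cos (θ - φ) * cH H θ)
        (Real.sin (θ - φ) * qH H θ) θ := by
      intro θ _
      have hs : HasDerivAt (fun θ => Real.sin (θ - φ)) (Real.cos (θ - φ)) θ := by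
        simpa using ((hasDerivAt_id θ).sub_const φ).sin
      have hc : HasDerivAt (fun θ => Real.cos (θ - φ)) (-Real.sin (θ - φ)) θ := by
        simpa using ((hasDerivAt_id θ).sub_const φ).cos
      exact ((hs.mul (cH_deriv2 hH θ)).sub (hc.mul (cH_deriv hH θ))).congr_deriv
        (by simp only [qH]; ring)
    have hIntg : IntervalIntegrable (fun θ => Real.sin (θ - φ) * qH H θ) volume φ (φ + Real.pi) :=
      ((by fun_prop : Continuous fun θ => Real.sin (θ - φ)).mul (qH_cont hH)).intervalIntegrable _ _
    have := intervalIntegral.integral_eq_sub_of_hasDerivAt hd hIntg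
    have heq : ∫ θ in φ..(φ + Real.pi), |Real.sin (θ - φ)| * qH H θ =
        ∫ θ in φ..(φ + Real.pi), Real.sin (θ - φ) * qH H θ := by
      apply intervalIntegral.integral_congr
      intro θ hθ
      rw [uIcc_of_le (by linarith [Real.pi_pos])] at hθ
      simp only
      rw [abs_of_nonneg (Real.sin_nonneg_of_nonneg_of_le_pi (by linarith [hθ.1])
        (by linarith [hθ.2]))]
    rw [heq, this]
    simp [cH_periodic hH φ]; ring
  have h1 := hone (-Real.pi)
  have h2 := hone 0
  rw [neg_add_cancel] at h1
  rw [zero_add] at h2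
  rw [← intervalIntegral.integral_add_adjacent_intervals (hcont.intervalIntegrable _ _)
    (hcont.intervalIntegrable _ _) (b := 0), h1, h2]
  ring

lemma zonoid (hH : IsAnisoNorm H) (ξ : E2) :
    ∫ θ in (-Real.pi)..Real.pi, |⟪ξ, ev' θ⟫| * qH H θ = 4 * H ξ := by
  obtain ⟨φ, -, hφ⟩ := exists_polar ξ
  have h1 : ∀ θ, |⟪ξ, ev' θ⟫| * qH H θ = ‖ξ‖ * (|⟪ev φ, ev' θ⟫| * qH H θ) := by
    intro θ
    conv_lhs => rw [hφ]
    rw [real_inner_smul_left, abs_mul, abs_of_nonneg (norm_nonneg _)]; ring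
  simp only [h1]
  rw [intervalIntegral.integral_const_mul, zonoid_ev hH]
  conv_rhs => rw [hφ, hH.homog, abs_of_nonneg (norm_nonneg _)]
  simp only [cH]; ring

end Hfacts
/-! ### Gradient maps, polar coordinates, the area of the Wulff shape -/

lemma measurable_pd (f : E2 → ℝ) (i : Fin 2) : Measurable (pd f i) :=
  measurable_fderiv_apply_const ℝ f _

lemma measurable_dethess (f : E2 → ℝ) : Measurable (fun x => (hessian f x).det) := by
  have : (fun x => (hessian f x).det) = fun x => pd (pd f 0) 0 x * pd (pd f 1) 1 x -
      pd (pd f 1) 0 x * pd (pd f 0) 1 x := by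
    funext x; rw [Matrix.det_fin_two]; rfl
  rw [this]
  exact ((measurable_pd _ _).mul (measurable_pd _ _)).sub
    ((measurable_pd _ _).mul (measurable_pd _ _))

lemma inner_gradient (v : E2 → ℝ) (x y : E2) : ⟪gradient v x, y⟫ = fderiv ℝ v x y := by
  rw [← toDual_gradient, InnerProductSpace.toDual_apply_apply]

lemma gradient_apply (v : E2 → ℝ) (x : E2) (i : Fin 2) : gradient v x i = pd v i x := by
  have := inner_gradient v x (EuclideanSpace.single i 1)
  rw [inner2] at this
  unfold pd
  rw [← this]
  fin_cases i <;> simp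

lemma measurable_gradient (v : E2 → ℝ) : Measurable (gradient v) := by
  have : gradient v = fun x => (InnerProductSpace.toDual ℝ E2).symm (fderiv ℝ v x) := rfl
  rw [this]
  exact (LinearIsometryEquiv.continuous _).measurable.comp (measurable_fderiv ℝ v)

lemma contDiffOn_gradient {v : E2 → ℝ} {s : Set E2} (hs : IsOpen s) (hv : ContDiffOn ℝ 2 v s) :
    ContDiffOn ℝ 1 (gradient v) s := by
  rw [contDiffOn_euclidean]
  intro i
  simp only [gradient_apply]
  exact contDiffOn_pd hs hv i

lemma det_fderiv_gradient {v : E2 → ℝ} {s : Set E2} (hs : IsOpen s) (hv : ContDiffOn ℝ 2 v s)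
    {x : E2} (hx : x ∈ s) : (fderiv ℝ (gradient v) x).det = (hessian v x).det := by
  have hd : ∀ y, (fderiv ℝ (gradient v) x y) 0 = fderiv ℝ (pd v 0) x y ∧
      (fderiv ℝ (gradient v) x y) 1 = fderiv ℝ (pd v 1) x y := by
    intro y
    have h := (((contDiffOn_gradient hs hv).contDiffAt (hs.mem_nhds hx)).differentiableAt
      (by norm_num)).hasFDerivAt
    have h2 : ∀ i : Fin 2, HasFDerivAt (fun x => gradient v x i)
        ((EuclideanSpace.proj i : E2 →L[ℝ] ℝ) ∘L (fderiv ℝ (gradient v) x)) x := fun i =>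
      (EuclideanSpace.proj i : E2 →L[ℝ] ℝ).hasFDerivAt.comp x h
    constructor
    · have h3 := (h2 0).fderiv
      simp only [gradient_apply] at h3
      rw [show (fun x => pd v 0 x) = pd v 0 from rfl] at h3
      rw [h3]; rfl
    · have h3 := (h2 1).fderiv
      simp only [gradient_apply] at h3
      rw [show (fun x => pd v 1 x) = pd v 1 from rfl] at h3
      rw [h3]; rfl
  rw [ContinuousLinearMap.det, ← LinearMap.det_toMatrix (EuclideanSpace.basisFun (Fin 2) ℝ).toBasis,
    Matrix.det_fin_two, Matrix.det_fin_two]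
  simp only [LinearMap.toMatrix_apply, OrthonormalBasis.coe_toBasis,
    OrthonormalBasis.coe_toBasis_repr_apply, EuclideanSpace.basisFun_apply,
    EuclideanSpace.basisFun_repr, ContinuousLinearMap.coe_coe, (hd _).1, (hd _).2]
  simp only [hessian, Matrix.of_apply, pd]
  ring

lemma wcv {f : E2 → E2} (hf : Measurable f) {A : Set E2} (hA : MeasurableSet A)
    (hd : ∀ x ∈ A, DifferentiableAt ℝ f x) {P : Set E2} (hP : MeasurableSet P) (hPA : P ⊆ f '' A)
    {w : E2 → ℝ≥0∞} (hw : Measurable w) :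
    ∫⁻ p in P, w p ≤ ∫⁻ x in A, ENNReal.ofReal |(fderiv ℝ f x).det| * w (f x) := by
  have hdet : Measurable (fun x => ENNReal.ofReal |(fderiv ℝ f x).det|) := by
    have h1 := measurable_fderiv ℝ f
    have h2 : Continuous (fun L : E2 →L[ℝ] E2 => L.det) := ContinuousLinearMap.continuous_det
    exact ENNReal.measurable_ofReal.comp
      (continuous_abs.measurable.comp (h2.measurable.comp h1))
  set ν := (volume.restrict A).withDensity (fun x => ENNReal.ofReal |(fderiv ℝ f x).det|) with hν
  have hle : volume.restrict P ≤ ν.map f := by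
    rw [Measure.le_iff]
    intro B hB
    rw [Measure.restrict_apply hB, Measure.map_apply hf hB, hν, withDensity_apply _ (hf hB),
      Measure.restrict_restrict (hf hB)]
    calc volume (B ∩ P) ≤ volume (f '' (f ⁻¹' B ∩ A)) := by
          apply measure_mono
          rintro p ⟨hpB, hpP⟩
          obtain ⟨x, hx, rfl⟩ := hPA hpP
          exact ⟨x, ⟨hpB, hx⟩, rfl⟩
      _ ≤ _ := addHaar_image_le_lintegral_abs_det_fderiv volume ((hf hB).inter hA)
          (fun x hx => (hd x hx.2).hasFDerivAt.hasFDerivWithinAt)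
  calc ∫⁻ p in P, w p ≤ ∫⁻ p, w p ∂(ν.map f) := lintegral_mono' hle le_rfl
    _ = ∫⁻ x, w (f x) ∂ν := lintegral_map hw hf
    _ = _ := by
        exact lintegral_withDensity_eq_lintegral_mul _ hdet (hw.comp hf)

lemma lintegral_polar (f : E2 → ℝ≥0∞) (hf : Measurable f) :
    ∫⁻ x, f x = ∫⁻ θ in Ioo (-Real.pi) Real.pi, ∫⁻ r in Ioi (0 : ℝ),
      ENNReal.ofReal r * f (r • ev θ) := by
  have h1 : ∫⁻ x, f x = ∫⁻ p : ℝ × ℝ, f !₂[p.1, p.2] := by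
    have e1 := (PiLp.volume_preserving_toLp (Fin 2)).lintegral_comp hf
    have e2 := (volume_preserving_finTwoArrow ℝ).symm.lintegral_comp
      (f := fun y : Fin 2 → ℝ => f (WithLp.toLp 2 y)) (hf.comp (by fun_prop))
    rw [← e1, ← e2]
    rfl
  rw [h1, ← lintegral_comp_polarCoord_symm]
  have hm : Measurable (fun p : ℝ × ℝ => ENNReal.ofReal p.1 •
      f !₂[(polarCoord.symm p).1, (polarCoord.symm p).2]) := by
    refine Measurable.mul (by fun_prop) (hf.comp ?_)
    simp only [polarCoord_symm_apply]
    fun_prop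
  rw [polarCoord_target]
  rw [show (volume : Measure (ℝ × ℝ)) = volume.prod volume from rfl]
  rw [setLIntegral_prod_symm _ hm.aemeasurable]
  refine lintegral_congr fun θ => lintegral_congr fun r => ?_
  simp only [polarCoord_symm_apply, smul_eq_mul]
  congr 2
  apply ext2 <;> simp

lemma inner_radial {d : ℝ} (hd : 0 < d) (g : ℝ) (hg : 0 ≤ g) :
    ∫⁻ r in Ioi (0 : ℝ), ENNReal.ofReal r * (if r * d < 1 then ENNReal.ofReal g else 0) =
      ENNReal.ofReal (g / (2 * d ^ 2)) := by
  have h1 : ∫⁻ r in Ioi (0 : ℝ), ENNReal.ofReal r * (if r * d < 1 then ENNReal.ofReal g else 0) =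
      ∫⁻ r in Ioi (0 : ℝ), (Iio (1 / d)).indicator (fun r => ENNReal.ofReal (r * g)) r := by
    refine setLIntegral_congr_fun measurableSet_Ioi fun r hr => ?_
    simp only [indicator, mem_Iio, lt_div_iff₀ hd]
    split_ifs
    · rw [ENNReal.ofReal_mul (le_of_lt hr)]
    · simp
  rw [h1, lintegral_indicator measurableSet_Iio, Measure.restrict_restrict measurableSet_Iio,
    Iio_inter_Ioi]
  have h0 : (0 : ℝ) ≤ 1 / d := by positivity
  rw [← ofReal_integral_eq_lintegral_ofReal]
  · rw [← integral_Ioc_eq_integral_Ioo, ← intervalIntegral.integral_of_le h0,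
      intervalIntegral.integral_mul_const, integral_id]
    congr 1
    field_simp
    ring
  · exact ((continuous_id.mul continuous_const).integrableOn_Icc (a := 0) (b := 1 / d)).mono_set
      Ioo_subset_Icc_self
  · filter_upwards [ae_restrict_mem measurableSet_Ioo] with r hr
    exact mul_nonneg hr.1.le hg

section Wulff

variable {H : E2 → ℝ}

lemma polar_area (hH : IsAnisoNorm H) {Q : E2 → ℝ} (hQ : Continuous Q)
    (hQh : ∀ r : ℝ, 0 < r → ∀ x, Q (r • x) = r * Q x) (hQp : ∀ x, x ≠ 0 → 0 < Q x) :
    ∫⁻ p in {p : E2 | p ≠ 0 ∧ Q p < 1}, ENNReal.ofReal (hessian (Fani H) p).det =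
      ENNReal.ofReal (∫ θ in (-Real.pi)..Real.pi,
        cH H θ ^ 3 * qH H θ / (2 * Q (ev θ) ^ 2)) := by
  have hms : MeasurableSet {p : E2 | p ≠ 0 ∧ Q p < 1} :=
    (isOpen_ne.inter (isOpen_lt hQ continuous_const)).measurableSet
  have hcev : Continuous ev := contDiff_ev.continuous
  have hmd : Measurable (fun p => ENNReal.ofReal (hessian (Fani H) p).det) :=
    ENNReal.measurable_ofReal.comp (measurable_dethess (Fani H))
  rw [← lintegral_indicator hms, lintegral_polar _ (hmd.indicator hms)]
  have h1 : ∀ θ, ∫⁻ r in Ioi (0 : ℝ), ENNReal.ofReal r *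
      ({p : E2 | p ≠ 0 ∧ Q p < 1}.indicator
        (fun p => ENNReal.ofReal (hessian (Fani H) p).det) (r • ev θ)) =
      ENNReal.ofReal (cH H θ ^ 3 * qH H θ / (2 * Q (ev θ) ^ 2)) := by
    intro θ
    rw [← inner_radial (hQp _ (ev_ne θ)) _
      (mul_nonneg (pow_nonneg (cH_pos hH θ).le 3) (qH_pos hH θ).le)]
    refine setLIntegral_congr_fun measurableSet_Ioi fun r hr => ?_
    have hr' : (0 : ℝ) < r := hr
    simp only [indicator, mem_setOf_eq, hQh r hr', detF_polar hH hr'.ne']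
    have : r • ev θ ≠ 0 := smul_ne_zero hr'.ne' (ev_ne θ)
    simp [this]
  simp only [h1]
  have hc : Continuous (fun θ => cH H θ ^ 3 * qH H θ / (2 * Q (ev θ) ^ 2)) := by
    refine Continuous.div (((cH_cont hH).pow 3).mul (qH_cont hH)) ?_ ?_
    · exact continuous_const.mul ((hQ.comp hcev).pow 2)
    · intro θ; have := hQp _ (ev_ne θ); positivity
  rw [intervalIntegral.integral_of_le (by linarith [Real.pi_pos]), integral_Ioc_eq_integral_Ioo,
    ← ofReal_integral_eq_lintegral_ofReal]
  · exact (hc.integrableOn_Icc).mono_set Ioo_subset_Icc_self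
  · refine Filter.Eventually.of_forall fun θ => ?_
    have := hQp _ (ev_ne θ); have := cH_pos hH θ; have := qH_pos hH θ
    simp only [Pi.zero_apply]
    positivity

/-- half of the integral of `c (c + c'')`, the area of the Wulff shape. -/
def kap (H : E2 → ℝ) : ℝ := (∫ θ in (-Real.pi)..Real.pi, cH H θ * qH H θ) / 2

lemma kap_nonneg (hH : IsAnisoNorm H) : 0 ≤ kap H := by
  unfold kap
  refine div_nonneg (intervalIntegral.integral_nonneg (by linarith [Real.pi_pos]) ?_) two_pos.le
  intro θ _
  exact mul_nonneg (cH_pos hH θ).le (qH_pos hH θ).le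

lemma inner_le_polar (hH : IsAnisoNorm H) {p : E2} (hp : p ≠ 0) (q : E2) :
    ⟪p, q⟫ / H p ≤ polar H q := by
  obtain ⟨α, hα, hc⟩ := hH.coercive
  have hb : BddAbove (range fun ξ : {ξ : E2 // ξ ≠ 0} => ⟪(ξ : E2), q⟫ / H ξ) := by
    refine ⟨‖q‖ / α, ?_⟩
    rintro _ ⟨⟨ξ, hξ⟩, rfl⟩
    simp only
    rw [div_le_div_iff₀ (H_pos hH hξ) hα]
    have h1 := real_inner_le_norm ξ q
    have h2 := hc ξ
    nlinarith [norm_nonneg q, norm_nonneg ξ]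
  exact le_ciSup hb ⟨p, hp⟩

lemma wulff_subset (hH : IsAnisoNorm H) :
    Wulff H ⊆ {0} ∪ gradient (Fani H) '' {p : E2 | p ≠ 0 ∧ H p < 1} := by
  intro q hq
  by_cases hq0 : q = 0
  · left; exact hq0
  right
  obtain ⟨α, hα, hc⟩ := hH.coercive
  have hcont : Continuous (fun p : E2 => ⟪p, q⟫ - Fani H p) := by
    refine (continuous_id.inner continuous_const).sub ?_
    unfold Fani
    exact ((H_cont hH).pow 2).div_const 2
  have hF0 : Fani H 0 = 0 := by simp [Fani, H_zero hH]
  obtain ⟨p, hp⟩ := hcont.exists_forall_ge' 0 (by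
    filter_upwards [(tendsto_norm_cocompact_atTop (E := E2)).eventually_ge_atTop
      (2 * ‖q‖ / α ^ 2)] with y hy
    have h1 := real_inner_le_norm y q
    have h2 := hc y
    rw [div_le_iff₀ (by positivity)] at hy
    rw [inner_zero_left, hF0]
    simp only [Fani]
    have h3 : (α * ‖y‖) ^ 2 ≤ H y ^ 2 := by
      apply pow_le_pow_left₀ (by positivity) h2
    nlinarith [norm_nonneg y])
  have hqn : 0 < ‖q‖ := norm_pos_iff.2 hq0
  have hFq : 0 < Fani H q := by unfold Fani; have := H_pos hH hq0; positivity
  have hp0 : p ≠ 0 := by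
    intro h0
    rw [h0] at hp
    have := hp ((‖q‖ ^ 2 / (2 * Fani H q)) • q)
    simp only [inner_zero_left, hF0, sub_zero, F_homog hH, real_inner_smul_left,
      real_inner_self_eq_norm_sq] at this
    have h2 : ‖q‖ ^ 2 / (2 * Fani H q) * ‖q‖ ^ 2 - (‖q‖ ^ 2 / (2 * Fani H q)) ^ 2 * Fani H q =
      ‖q‖ ^ 4 / (4 * Fani H q) := by field_simp; ring
    rw [h2] at this
    have : 0 < ‖q‖ ^ 4 / (4 * Fani H q) := by positivity
    linarith
  have hFd : DifferentiableAt ℝ (Fani H) p :=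
    ((F_smooth hH).contDiffAt (isOpen_compl_singleton.mem_nhds hp0)).differentiableAt (by norm_num)
  have hloc : IsLocalMax (fun p : E2 => ⟪p, q⟫ - Fani H p) p := Filter.Eventually.of_forall hp
  have hfd : HasFDerivAt (fun p : E2 => ⟪p, q⟫ - Fani H p) (innerSL ℝ q - fderiv ℝ (Fani H) p) p := by
    refine HasFDerivAt.sub ?_ hFd.hasFDerivAt
    have : (fun p : E2 => ⟪p, q⟫) = fun p => innerSL ℝ q p := by
      funext p; rw [innerSL_apply_apply, real_inner_comm]
    rw [this]
    exact (innerSL ℝ q).hasFDerivAt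
  have h0 := hloc.hasFDerivAt_eq_zero hfd
  have hgrad : gradient (Fani H) p = q := by
    apply ext_inner_right ℝ
    intro y
    rw [inner_gradient]
    have := congrArg (fun L => L y) h0
    simp at this
    linarith
  refine ⟨p, ⟨hp0, ?_⟩, hgrad⟩
  -- Euler
  have heul : ⟪p, q⟫ = H p ^ 2 := by
    have hsm : HasDerivAt (fun s : ℝ => s • p) p 1 := by
      simpa using (hasDerivAt_id (1 : ℝ)).smul_const p
    have h1 : HasDerivAt (fun s : ℝ => Fani H (s • p)) (fderiv ℝ (Fani H) p p) 1 := by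
      have h2 : HasFDerivAt (Fani H) (fderiv ℝ (Fani H) p) ((1 : ℝ) • p) := by
        simpa using hFd.hasFDerivAt
      exact h2.comp_hasDerivAt (1 : ℝ) hsm
    have h2 : HasDerivAt (fun s : ℝ => Fani H (s • p)) (2 * Fani H p) 1 := by
      have : (fun s : ℝ => Fani H (s • p)) = fun s => s ^ 2 * Fani H p := by
        funext s; exact F_homog hH _ _
      rw [this]
      simpa using (hasDerivAt_pow 2 (1 : ℝ)).mul_const (Fani H p)
    have h3 := h1.unique h2
    rw [← inner_gradient, hgrad, real_inner_comm] at h3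
    rw [h3]; unfold Fani; ring
  have h1 := lt_of_le_of_lt (inner_le_polar hH hp0 q) hq
  have hHp := H_pos hH hp0
  rw [heul, div_lt_one hHp] at h1
  nlinarith

lemma kappa_le (hH : IsAnisoNorm H) : kappa H ≤ kap H := by
  have hms : MeasurableSet {p : E2 | p ≠ 0 ∧ H p < 1} :=
    (isOpen_ne.inter (isOpen_lt (H_cont hH) continuous_const)).measurableSet
  have hopen : IsOpen ({(0 : E2)}ᶜ) := isOpen_compl_singleton
  have h1 : volume (Wulff H) ≤ ENNReal.ofReal (kap H) := by
    calc volume (Wulff H) ≤ volume ({0} ∪ gradient (Fani H) '' {p : E2 | p ≠ 0 ∧ H p < 1}) :=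
          measure_mono (wulff_subset hH)
      _ ≤ volume {(0 : E2)} + volume (gradient (Fani H) '' {p : E2 | p ≠ 0 ∧ H p < 1}) :=
          measure_union_le _ _
      _ = volume (gradient (Fani H) '' {p : E2 | p ≠ 0 ∧ H p < 1}) := by simp
      _ ≤ ∫⁻ p in {p : E2 | p ≠ 0 ∧ H p < 1},
            ENNReal.ofReal |(fderiv ℝ (gradient (Fani H)) p).det| := by
          apply addHaar_image_le_lintegral_abs_det_fderiv volume hms
          intro x hx
          exact (((contDiffOn_gradient hopen (F_smooth hH)).contDiffAt
            (hopen.mem_nhds hx.1)).differentiableAt (by norm_num)).hasFDerivAt.hasFDerivWithinAt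
      _ = ∫⁻ p in {p : E2 | p ≠ 0 ∧ H p < 1}, ENNReal.ofReal (hessian (Fani H) p).det := by
          refine setLIntegral_congr_fun hms fun x hx => ?_
          rw [det_fderiv_gradient hopen (F_smooth hH) hx.1, abs_of_pos (detF_pos hH hx.1)]
      _ = ENNReal.ofReal (kap H) := by
          rw [polar_area hH (H_cont hH) (fun r hr x => by rw [hH.homog, abs_of_pos hr])
            (fun x hx => H_pos hH hx)]
          congr 1
          unfold kap
          rw [← intervalIntegral.integral_div]
          congr 1
          funext θ
          have := cH_pos hH θ
          change _ / (2 * cH H θ ^ 2) = _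
          field_simp
  unfold kappa
  exact ENNReal.toReal_le_of_le_ofReal (kap_nonneg hH) h1

end Wulff
/-! ### Basic facts about functions in the class `Φ₀` -/

/-- The standing hypotheses on `Ω` and `u`. -/
structure Setup (Ω : Set E2) (u : E2 → ℝ) : Prop where
  op : IsOpen Ω
  bd : Bornology.IsBounded Ω
  cv : Convex ℝ Ω
  phi : MemPhi0 Ω u
  c2 : ContDiffOn ℝ 2 u (Eu Ω u)

namespace Setup

variable {Ω : Set E2} {u : E2 → ℝ}

lemma cont (S : Setup Ω u) : ContinuousOn u (closure Ω) := S.phi.c1.continuousOn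

lemma cpt (S : Setup Ω u) : IsCompact (closure Ω) := S.bd.isCompact_closure

lemma le_max (S : Setup Ω u) {x : E2} (hx : x ∈ closure Ω) : u x ≤ maxcl Ω u :=
  le_csSup (S.cpt.image_of_continuousOn S.cont).bddAbove ⟨x, hx, rfl⟩

lemma bdry (S : Setup Ω u) {x : E2} (hx : x ∈ closure Ω) (hu : u x ≠ 0) : x ∈ Ω := by
  by_contra h
  exact hu (S.phi.bzero x ⟨hx, by rwa [S.op.interior_eq]⟩)

lemma diff (S : Setup Ω u) {x : E2} (hx : x ∈ Ω) : DifferentiableAt ℝ u x :=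
  (S.phi.c1.contDiffAt (Filter.mem_of_superset (S.op.mem_nhds hx) subset_closure)).differentiableAt
    (by norm_num)

lemma nonneg (S : Setup Ω u) {x : E2} (hx : x ∈ Ω) : 0 ≤ u x := by
  by_contra hneg
  push Not at hneg
  obtain ⟨x0, hx0, hmin⟩ := S.cpt.exists_isMinOn ⟨x, subset_closure hx⟩ S.cont
  have h0 : u x0 < 0 := lt_of_le_of_lt (hmin (subset_closure hx)) hneg
  have hx0Ω : x0 ∈ Ω := S.bdry hx0 h0.ne
  have hle : ∀ y ∈ Ω, u y ≤ u x0 := by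
    intro y hy
    have hc : Continuous (fun ε : ℝ => x0 - ε • (y - x0)) := by fun_prop
    have hev : ∀ᶠ ε : ℝ in nhds 0, x0 - ε • (y - x0) ∈ Ω := by
      apply hc.continuousAt.eventually
      simpa using S.op.mem_nhds hx0Ω
    obtain ⟨ε, hε, hεpos⟩ :=
      ((hev.filter_mono nhdsWithin_le_nhds).and (self_mem_nhdsWithin (s := Ioi (0 : ℝ)))).exists
    have hεp : (0 : ℝ) < ε := hεpos
    have hcc := S.phi.concave.2 hε hy (by positivity : (0 : ℝ) ≤ 1 / (1 + ε))
      (by positivity : (0 : ℝ) ≤ ε / (1 + ε)) (by field_simp)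
    have he : (1 / (1 + ε)) • (x0 - ε • (y - x0)) + (ε / (1 + ε)) • y = x0 := by
      have h1 : (1 + ε) ≠ 0 := by positivity
      apply ext2 <;> simp <;> field_simp <;> ring
    rw [he] at hcc
    have hm : u x0 ≤ u (x0 - ε • (y - x0)) := hmin (subset_closure hε)
    simp only [smul_eq_mul] at hcc
    have h1 : 0 < 1 + ε := by positivity
    have h2 : u (x0 - ε • (y - x0)) + ε * u y ≤ (1 + ε) * u x0 := by
      calc _ = (1 + ε) * (1 / (1 + ε) * u (x0 - ε • (y - x0)) + ε / (1 + ε) * u y) := by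
            field_simp
        _ ≤ _ := by gcongr
    nlinarith
  -- frontier point
  have hne : Ω ≠ univ := by
    intro h
    have := S.bd
    rw [h] at this
    exact NormedSpace.unbounded_univ ℝ E2 this
  obtain ⟨z, hz⟩ : (frontier Ω).Nonempty := by
    rw [nonempty_iff_ne_empty]
    intro h
    rcases isClopen_iff.1 (isClopen_iff_frontier_eq_empty.2 h) with h | h
    · rw [h] at hx; exact hx
    · exact hne h
  have hz0 := S.phi.bzero z hz
  have : u z ≤ u x0 := by
    have hcl : z ∈ closure Ω := hz.1
    have ht := (S.cont z hcl).mono subset_closure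
    have : (nhdsWithin z Ω).NeBot := mem_closure_iff_nhdsWithin_neBot.1 hcl
    exact le_of_tendsto ht (by filter_upwards [self_mem_nhdsWithin] with y hy using hle y hy)
  linarith

lemma nonneg' (S : Setup Ω u) {x : E2} (hx : x ∈ closure Ω) : 0 ≤ u x := by
  by_cases h : u x = 0
  · exact h.ge
  · exact S.nonneg (S.bdry hx h)

lemma Eu_eq (S : Setup Ω u) : Eu Ω u = {x ∈ Ω | u x < maxcl Ω u} := by
  ext x
  constructor
  · rintro ⟨h1, -, h2⟩; exact ⟨h1, h2⟩
  · rintro ⟨h1, h2⟩; exact ⟨h1, S.nonneg h1, h2⟩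

lemma Eu_open (S : Setup Ω u) : IsOpen (Eu Ω u) := by
  rw [S.Eu_eq]
  exact (S.cont.mono subset_closure).isOpen_inter_preimage S.op isOpen_Iio

lemma grad_ineq (S : Setup Ω u) {x y : E2} (hx : x ∈ Ω) (hy : y ∈ Ω) : u y ≤ u x + fderiv ℝ u x (y - x) := by
  have hg : ConcaveOn ℝ (Icc (0 : ℝ) 1) (fun s : ℝ => u (x + s • (y - x))) := by
    refine ⟨convex_Icc 0 1, ?_⟩
    intro a ha b hb p q hp hq hpq
    have hmem : ∀ s ∈ Icc (0 : ℝ) 1, x + s • (y - x) ∈ Ω := fun s hs =>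
      S.cv.add_smul_sub_mem hx hy hs
    have := S.phi.concave.2 (hmem a ha) (hmem b hb) hp hq hpq
    refine this.trans (le_of_eq ?_)
    simp only
    congr 1
    have hq' : q = 1 - p := by linarith
    subst hq'
    apply ext2 <;> simp <;> ring
  have hd : HasDerivAt (fun s : ℝ => u (x + s • (y - x))) (fderiv ℝ u x (y - x)) 0 := by
    have h1 : HasDerivAt (fun s : ℝ => x + s • (y - x)) (y - x) 0 := by
      simpa using ((hasDerivAt_id (0 : ℝ)).smul_const (y - x)).const_add x
    have h2 : HasFDerivAt u (fderiv ℝ u x) (x + (0 : ℝ) • (y - x)) := by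
      simpa using (S.diff hx).hasFDerivAt
    exact h2.comp_hasDerivAt (0 : ℝ) h1
  have := hg.slope_le_of_hasDerivAt (x := 0) (y := 1) (by simp) (by simp) one_pos hd
  rw [slope_def_field] at this
  simp at this
  rw [map_sub]
  linarith

lemma exists_max (S : Setup Ω u) (h : 0 < maxcl Ω u) : ∃ x ∈ Ω, u x = maxcl Ω u := by
  have hne : (closure Ω).Nonempty := by
    by_contra hc
    rw [not_nonempty_iff_eq_empty] at hc
    simp [maxcl, hc] at h
  obtain ⟨x, hx, hm⟩ := S.cpt.exists_isMaxOn hne S.cont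
  have hxm : u x = maxcl Ω u := by
    apply le_antisymm (S.le_max hx)
    apply csSup_le (hne.image u)
    rintro _ ⟨y, hy, rfl⟩
    exact hm hy
  exact ⟨x, S.bdry hx (by rw [hxm]; exact h.ne'), hxm⟩

lemma fderiv_ne (S : Setup Ω u) {x : E2} (hx : x ∈ Eu Ω u) : fderiv ℝ u x ≠ 0 := by
  intro h
  obtain ⟨y, hy, hym⟩ := S.exists_max (lt_of_le_of_lt hx.2.1 hx.2.2)
  have := S.grad_ineq hx.1 hy
  rw [h, hym] at this
  simp at this
  exact absurd hx.2.2 (not_lt.2 this)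

lemma grad_ne (S : Setup Ω u) {x : E2} (hx : x ∈ Eu Ω u) : gradient u x ≠ 0 := by
  intro h
  apply S.fderiv_ne hx
  rw [← toDual_gradient, h, map_zero]

lemma grad_eq_zero (S : Setup Ω u) {x : E2} (hx : x ∈ Ω) (hm : u x = maxcl Ω u) : gradient u x = 0 := by
  have : IsLocalMax u x := by
    filter_upwards [S.op.mem_nhds hx] with y hy
    rw [hm]; exact S.le_max (subset_closure hy)
  rw [gradient, this.fderiv_eq_zero, map_zero]

lemma det_nonneg_of_form {a b c d : ℝ} (h : ∀ x y : ℝ,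
    a * x * x + b * x * y + (c * y * x + d * y * y) ≤ 0) : 0 ≤ a * d - b * c := by
  have h1 : ∀ x : ℝ, a * (x * x) + (b + c) * x + d ≤ 0 := by
    intro x; have := h x 1; nlinarith
  have := discrim_le_zero_of_nonpos h1
  unfold discrim at this
  nlinarith [sq_nonneg (b - c)]

lemma pd_diff (S : Setup Ω u) {x : E2} (hx : x ∈ Eu Ω u) (j : Fin 2) : DifferentiableAt ℝ (pd u j) x :=
  ((contDiffOn_pd S.Eu_open S.c2 j).contDiffAt (S.Eu_open.mem_nhds hx)).differentiableAt
    (by norm_num)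

lemma det_nonneg (S : Setup Ω u) {x : E2} (hx : x ∈ Eu Ω u) : 0 ≤ (hessian u x).det := by
  rw [Matrix.det_fin_two]
  apply det_nonneg_of_form
  intro p q
  set v : E2 := !₂[p, q] with hv
  have hline : HasDerivAt (fun s : ℝ => x + s • v) v 0 := by
    simpa using ((hasDerivAt_id (0 : ℝ)).smul_const v).const_add x
  have hpd : ∀ j, HasDerivAt (fun s : ℝ => pd u j (x + s • v)) (fderiv ℝ (pd u j) x v) 0 := by
    intro j
    have h2 : HasFDerivAt (pd u j) (fderiv ℝ (pd u j) x) (x + (0 : ℝ) • v) := by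
      simpa using (S.pd_diff hx j).hasFDerivAt
    exact h2.comp_hasDerivAt (0 : ℝ) hline
  have hg := ((hpd 0).mul_const p).add ((hpd 1).mul_const q)
  have hsl := hasDerivAt_iff_tendsto_slope.1 hg
  have hle : fderiv ℝ (pd u 0) x v * p + fderiv ℝ (pd u 1) x v * q ≤ 0 := by
    refine le_of_tendsto hsl ?_
    have hev : ∀ᶠ s : ℝ in nhds 0, x + s • v ∈ Ω := by
      apply hline.continuousAt.eventually
      simpa using S.op.mem_nhds hx.1
    filter_upwards [hev.filter_mono nhdsWithin_le_nhds, self_mem_nhdsWithin] with s hs hs0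
    have g1 := S.grad_ineq hx.1 hs
    have g2 := S.grad_ineq hs hx.1
    rw [fderiv_eq_pd] at g1 g2
    have hs0' : s ≠ 0 := hs0
    rw [slope_def_field]
    simp [hv] at g1 g2 ⊢
    have h3 : s * (pd u 0 (x + s • v) * p + pd u 1 (x + s • v) * q -
        (pd u 0 x * p + pd u 1 x * q)) ≤ 0 := by
      simp only [hv]; nlinarith
    have h4 : (pd u 0 (x + s • v) * p + pd u 1 (x + s • v) * q -
        (pd u 0 x * p + pd u 1 x * q)) / s = (s * (pd u 0 (x + s • v) * p + pd u 1 (x + s • v) * q -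
        (pd u 0 x * p + pd u 1 x * q))) / s ^ 2 := by field_simp
    simp only [hv] at h4 h3
    rw [h4]
    exact div_nonpos_of_nonpos_of_nonneg h3 (sq_nonneg s)
  rw [fderiv_eq_pd, fderiv_eq_pd] at hle
  simp [hv] at hle
  simp only [hessian, Matrix.of_apply]
  nlinarith

lemma det_zero_ae (S : Setup Ω u) : ∀ᵐ x ∂(volume.restrict Ω), x ∉ Eu Ω u → ∀ i j, hessian u x i j = 0 := by
  have hconv : Convex ℝ {x ∈ Ω | maxcl Ω u ≤ u x} := S.phi.concave.convex_ge _
  have h0 := hconv.addHaar_frontier volume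
  have h1 : ∀ᵐ x : E2 ∂volume, x ∉ frontier {x ∈ Ω | maxcl Ω u ≤ u x} := measure_eq_zero_iff_ae_notMem.1 h0
  rw [ae_restrict_iff' S.op.measurableSet]
  filter_upwards [h1] with x hx hxΩ hxE i j
  have hxN : x ∈ {x ∈ Ω | maxcl Ω u ≤ u x} := by
    refine ⟨hxΩ, ?_⟩
    by_contra hc
    push Not at hc
    exact hxE (by rw [S.Eu_eq]; exact ⟨hxΩ, hc⟩)
  have hIntg : x ∈ interior {x ∈ Ω | maxcl Ω u ≤ u x} := by
    by_contra hc
    exact hx ⟨subset_closure hxN, hc⟩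
  have hpd : ∀ y ∈ interior {x ∈ Ω | maxcl Ω u ≤ u x}, pd u j y = 0 := by
    intro y hy
    have hy' := interior_subset hy
    have : gradient u y = 0 := S.grad_eq_zero hy'.1
      (le_antisymm (S.le_max (subset_closure hy'.1)) hy'.2)
    rw [← gradient_apply, this]; rfl
  have hev : pd u j =ᶠ[nhds x] fun _ => 0 := by
    filter_upwards [isOpen_interior.mem_nhds hIntg] with y hy using hpd y hy
  simp only [hessian, Matrix.of_apply]
  rw [pd, hev.fderiv_eq]
  simp

variable {H : E2 → ℝ}

lemma detH_nonneg (S : Setup Ω u) (hH : IsAnisoNorm H) {x : E2} (hx : x ∈ Eu Ω u) : 0 ≤ detH H u x :=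
  mul_nonneg (detF_pos hH (S.grad_ne hx)).le (S.det_nonneg hx)

lemma detH_zero_ae (S : Setup Ω u) : ∀ᵐ x ∂(volume.restrict Ω), x ∉ Eu Ω u → detH H u x = 0 := by
  filter_upwards [S.det_zero_ae] with x hx hE
  rw [detH, Matrix.det_fin_two (hessian u x)]
  simp [hx hE]

lemma udetH_nonneg (S : Setup Ω u) (hH : IsAnisoNorm H) :
    ∀ᵐ x ∂(volume.restrict Ω), 0 ≤ u x * detH H u x := by
  filter_upwards [S.detH_zero_ae (H := H), ae_restrict_mem S.op.measurableSet] with x hx hxΩ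
  refine mul_nonneg (S.nonneg hxΩ) ?_
  by_cases hE : x ∈ Eu Ω u
  · exact S.detH_nonneg hH hE
  · rw [hx hE]

lemma detF_bound (hH : IsAnisoNorm H) : ∃ C, 0 ≤ C ∧ ∀ x : E2, x ≠ 0 →
    |(hessian (Fani H) x).det| ≤ C := by
  have hc : Continuous (fun θ => cH H θ ^ 3 * qH H θ) := ((cH_cont hH).pow 3).mul (qH_cont hH)
  obtain ⟨C, hC⟩ := (isCompact_Icc (a := -Real.pi) (b := Real.pi)).exists_bound_of_continuousOn
    hc.continuousOn
  refine ⟨C, le_trans (norm_nonneg _) (hC 0 ⟨by linarith [Real.pi_pos], Real.pi_pos.le⟩), ?_⟩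
  intro x hx
  obtain ⟨θ, hθ, he⟩ := exists_polar x
  rw [he, detF_polar hH (norm_ne_zero_iff.2 hx)]
  exact hC θ hθ

lemma measurable_detH (H u : E2 → ℝ) : Measurable (detH H u) := by
  have h1 : Measurable (fun x => (hessian (Fani H) (gradient u x)).det) :=
    (measurable_dethess (Fani H)).comp (measurable_gradient u)
  exact h1.mul (measurable_dethess u)

lemma integrable (S : Setup Ω u) (hH : IsAnisoNorm H) :
    IntegrableOn (fun x => u x * detH H u x) Ω volume := by
  obtain ⟨C, hC0, hC⟩ := detF_bound hH
  have hprod : ∀ i j k l, Integrable (fun x => hessian u x i j * hessian u x k l)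
      (volume.restrict Ω) := fun i j k l => (S.phi.sobolev i j).integrable_mul (S.phi.sobolev k l)
  have hdom : Integrable (fun x => |maxcl Ω u| * C * (|hessian u x 0 0 * hessian u x 1 1| +
      |hessian u x 0 1 * hessian u x 1 0|)) (volume.restrict Ω) :=
    ((hprod 0 0 1 1).abs.add (hprod 0 1 1 0).abs).const_mul _
  refine hdom.mono' ?_ ?_
  · exact (((S.cont.mono subset_closure).aestronglyMeasurable S.op.measurableSet)).mul
      (measurable_detH H u).aestronglyMeasurable
  · filter_upwards [S.detH_zero_ae (H := H), ae_restrict_mem S.op.measurableSet] with x hx hxΩ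
    by_cases hE : x ∈ Eu Ω u
    · rw [Real.norm_eq_abs, abs_mul, detH, abs_mul, mul_assoc |maxcl Ω u|]
      have h1 : |u x| ≤ |maxcl Ω u| := by
        rw [abs_of_nonneg (S.nonneg hxΩ)]
        exact (S.le_max (subset_closure hxΩ)).trans (le_abs_self _)
      have h2 : |(hessian u x).det| ≤ |hessian u x 0 0 * hessian u x 1 1| +
          |hessian u x 0 1 * hessian u x 1 0| := by
        rw [Matrix.det_fin_two]; exact abs_sub _ _
      exact mul_le_mul h1 (mul_le_mul (hC _ (S.grad_ne hE)) h2 (abs_nonneg _) hC0)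
        (by positivity) (by positivity)
    · rw [hx hE]; simp; positivity

end Setup
/-! ### Length of planar curves and their projections -/

lemma perp_est {n v : E2} (hn : ‖n‖ = 1) (θ : ℝ) {ε : ℝ} (h : |⟪n, v⟫| ≤ ε * ‖v‖) :
    |⟪v, ev θ⟫| ≤ (|⟪n, ev' θ⟫| + 2 * ε) * ‖v‖ ∧ (|⟪n, ev' θ⟫| - 2 * ε) * ‖v‖ ≤ |⟪v, ev θ⟫| := by
  have hn2 : n 0 ^ 2 + n 1 ^ 2 = 1 := by rw [← normsq2, hn]; norm_num
  have hcs := Real.sin_sq_add_cos_sq θ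
  set s := ⟪n, v⟫ with hs
  set a := ⟪n, ev' θ⟫ with ha
  set g := ⟪n, ev θ⟫ with hg
  set w := n 0 * v 1 - n 1 * v 0 with hw
  have e1 : ⟪v, ev θ⟫ = s * g - w * a := by
    rw [hs, ha, hg, hw]
    simp only [inner2, ev_0, ev_1]
    have : ev' θ 0 = -Real.sin θ ∧ ev' θ 1 = Real.cos θ := ⟨rfl, rfl⟩
    rw [this.1, this.2]
    linear_combination (-(v 0 * Real.cos θ + v 1 * Real.sin θ)) * hn2
  have e2 : w ^ 2 + s ^ 2 = ‖v‖ ^ 2 := by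
    rw [normsq2, hs, hw, inner2]
    linear_combination (v 0 ^ 2 + v 1 ^ 2) * hn2
  have e3 : a ^ 2 + g ^ 2 = 1 := by
    rw [ha, hg]
    simp only [inner2, ev_0, ev_1]
    have : ev' θ 0 = -Real.sin θ ∧ ev' θ 1 = Real.cos θ := ⟨rfl, rfl⟩
    rw [this.1, this.2]
    linear_combination (n 0 ^ 2 + n 1 ^ 2) * hcs + hn2
  have ha1 : |a| ≤ 1 := abs_le_one_iff_mul_self_le_one.2 (by nlinarith)
  have hg1 : |g| ≤ 1 := abs_le_one_iff_mul_self_le_one.2 (by nlinarith)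
  have hw1 : |w| ≤ ‖v‖ := by
    apply abs_le_of_sq_le_sq _ (norm_nonneg v)
    nlinarith
  have hw2 : ‖v‖ ≤ |w| + |s| := by
    apply le_of_sq_le_sq _ (by positivity)
    nlinarith [sq_abs w, sq_abs s, mul_nonneg (abs_nonneg w) (abs_nonneg s)]
  have hsg : |s * g| ≤ |s| := by
    rw [abs_mul]; exact mul_le_of_le_one_right (abs_nonneg _) hg1
  have hwa : |w * a| = |w| * |a| := abs_mul _ _
  rw [e1]
  constructor
  · have := abs_sub (s * g) (w * a)
    have h3 : |w| * |a| ≤ ‖v‖ * |a| := by gcongr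
    have := abs_nonneg s
    nlinarith
  · have h4 := abs_sub_abs_le_abs_sub (w * a) (s * g)
    rw [abs_sub_comm] at h4
    have h3 : (‖v‖ - |s|) * |a| ≤ |w| * |a| := by gcongr; linarith
    have h5 : |s| * |a| ≤ |s| := mul_le_of_le_one_right (abs_nonneg _) ha1
    nlinarith

/-- A rectifiable-like curve with unit normal `ν`. -/
structure IsCurve (Γ : Set E2) (ν : E2 → E2) : Prop where
  cpt : IsCompact Γ
  unit : ∀ x ∈ Γ, ‖ν x‖ = 1
  meas : Measurable ν
  loc : ∀ x0 ∈ Γ, ∀ ε > 0, ∃ U ∈ nhds x0, (∀ x ∈ Γ ∩ U, ‖ν x - ν x0‖ ≤ ε) ∧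
    ∀ x ∈ Γ ∩ U, ∀ y ∈ Γ ∩ U, |⟪ν x0, x - y⟫| ≤ ε * ‖x - y‖

namespace IsCurve

variable {Γ : Set E2} {ν : E2 → E2}

lemma upper {A : Set E2} {θ k : ℝ} (hk : 0 ≤ k)
    (h : ∀ x ∈ A, ∀ y ∈ A, |⟪x - y, ev θ⟫| ≤ k * ‖x - y‖) :
    volume ((fun x : E2 => ⟪x, ev θ⟫) '' A) ≤ ENNReal.ofReal k * μH[1] A := by
  have hl : LipschitzOnWith k.toNNReal (fun x : E2 => ⟪x, ev θ⟫) A := by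
    apply LipschitzOnWith.of_dist_le_mul
    intro x hx y hy
    rw [Real.dist_eq, dist_eq_norm, ← inner_sub_left, Real.coe_toNNReal k hk]
    exact h x hx y hy
  have := hl.hausdorffMeasure_image_le (d := 1) zero_le_one
  rw [hausdorffMeasure_real, ENNReal.rpow_one] at this
  exact this

lemma lower {A : Set E2} {θ k : ℝ}
    (h : ∀ x ∈ A, ∀ y ∈ A, k * ‖x - y‖ ≤ |⟪x - y, ev θ⟫|) :
    ENNReal.ofReal k * μH[1] A ≤ volume ((fun x : E2 => ⟪x, ev θ⟫) '' A) := by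
  rcases le_or_gt k 0 with hk | hk
  · simp [ENNReal.ofReal_of_nonpos hk]
  set π : E2 → ℝ := fun x : E2 => ⟪x, ev θ⟫ with hπ
  have hinj : InjOn π A := by
    intro x hx y hy hxy
    have h1 := h x hx y hy
    rw [inner_sub_left] at h1
    have h2 : ⟪x, ev θ⟫ = ⟪y, ev θ⟫ := hxy
    rw [h2, sub_self, abs_zero] at h1
    have h3 : ‖x - y‖ ≤ 0 := by
      by_contra hc; push Not at hc; nlinarith [mul_pos hk hc]
    exact sub_eq_zero.1 (norm_le_zero_iff.1 h3)
  have hl : LipschitzOnWith (k⁻¹).toNNReal (Function.invFunOn π A) (π '' A) := by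
    apply LipschitzOnWith.of_dist_le_mul
    rintro _ ⟨x, hx, rfl⟩ _ ⟨y, hy, rfl⟩
    rw [hinj.leftInvOn_invFunOn hx, hinj.leftInvOn_invFunOn hy, dist_eq_norm, Real.dist_eq,
      Real.coe_toNNReal _ (inv_nonneg.2 hk.le)]
    have h1 := h x hx y hy
    rw [inner_sub_left] at h1
    rw [inv_mul_eq_div, le_div_iff₀ hk]
    simp only [hπ]; linarith
  have := hl.hausdorffMeasure_image_le (d := 1) zero_le_one
  rw [hausdorffMeasure_real, hinj.invFunOn_image Subset.rfl] at this
  simp only [ENNReal.rpow_one] at this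
  have hk' : ENNReal.ofReal k * ENNReal.ofReal k⁻¹ = 1 := by
    rw [← ENNReal.ofReal_mul hk.le, mul_inv_cancel₀ hk.ne', ENNReal.ofReal_one]
  calc ENNReal.ofReal k * μH[1] A ≤ ENNReal.ofReal k * (ENNReal.ofReal k⁻¹ * volume (π '' A)) := by
        gcongr; exact this
    _ = _ := by rw [← mul_assoc, hk', one_mul]

lemma meas_lt_top (C : IsCurve Γ ν) : μH[1] Γ < ∞ := by
  refine C.cpt.induction_on (p := fun s => μH[1] s < ∞) (by simp)
    (fun s t hst ht => (measure_mono hst).trans_lt ht)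
    (fun s t hs ht => (measure_union_le s t).trans_lt (ENNReal.add_lt_top.2 ⟨hs, ht⟩)) ?_
  intro x0 hx0
  obtain ⟨U, hU, -, h2⟩ := C.loc x0 hx0 (1 / 4) (by norm_num)
  refine ⟨Γ ∩ U, inter_mem_nhdsWithin _ hU, ?_⟩
  obtain ⟨φ, -, hφ⟩ := exists_polar (ν x0)
  rw [C.unit x0 hx0, one_smul] at hφ
  set θ := φ - Real.pi / 2 with hθ
  have hin : |⟪ν x0, ev' θ⟫| = 1 := by
    have : ev' θ = ev φ := by
      apply ext2
      · change -Real.sin (φ - Real.pi / 2) = Real.cos φ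
        rw [Real.sin_sub_pi_div_two]; ring
      · change Real.cos (φ - Real.pi / 2) = Real.sin φ
        rw [Real.cos_sub_pi_div_two]
    rw [this, hφ, real_inner_self_eq_norm_sq, norm_ev]; norm_num
  have hlow := lower (A := Γ ∩ U) (θ := θ) (k := 1 / 2) (by
    intro x hx y hy
    have := (perp_est (C.unit x0 hx0) θ (h2 x hx y hy)).2
    rw [hin] at this
    norm_num at this ⊢
    exact this)
  have hfin : volume ((fun x : E2 => ⟪x, ev θ⟫) '' (Γ ∩ U)) < ∞ := by
    refine (measure_mono (image_mono inter_subset_left)).trans_lt ?_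
    exact (C.cpt.image (by fun_prop)).measure_lt_top
  have h3 := hlow.trans_lt hfin
  by_contra hc
  rw [not_lt, top_le_iff] at hc
  rw [hc, ENNReal.mul_top (by simp)] at h3
  exact lt_irrefl _ h3

lemma approx (C : IsCurve Γ ν) (θ : ℝ) {ε : ℝ} (hε : 0 < ε) {A : Set E2} (hA : MeasurableSet A)
    (hAΓ : A ⊆ Γ) (hinj : InjOn (fun x : E2 => ⟪x, ev θ⟫) A) :
    volume ((fun x : E2 => ⟪x, ev θ⟫) '' A) ≤
      ∫⁻ x in A, ENNReal.ofReal |⟪ν x, ev' θ⟫| ∂μH[1] + ENNReal.ofReal (3 * ε) * μH[1] A ∧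
    ∫⁻ x in A, ENNReal.ofReal |⟪ν x, ev' θ⟫| ∂μH[1] ≤
      volume ((fun x : E2 => ⟪x, ev θ⟫) '' A) + ENNReal.ofReal (3 * ε) * μH[1] A := by
  set π : E2 → ℝ := fun x : E2 => ⟪x, ev θ⟫ with hπ
  have hπc : Continuous π := by simp only [hπ]; fun_prop
  set a : E2 → ℝ≥0∞ := fun x => ENNReal.ofReal |⟪ν x, ev' θ⟫| with ha
  have hev1 : ‖ev' θ‖ = 1 := by
    have h := normsq2 (ev' θ)
    have : ev' θ 0 = -Real.sin θ ∧ ev' θ 1 = Real.cos θ := ⟨rfl, rfl⟩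
    rw [this.1, this.2] at h
    have := Real.sin_sq_add_cos_sq θ
    nlinarith [norm_nonneg (ev' θ)]
  have ham : Measurable a := by
    simp only [ha]
    exact (continuous_abs.measurable.comp (C.meas.inner_const)).ennreal_ofReal
  suffices h : ∃ s', MeasurableSet s' ∧ Γ ⊆ s' ∧ ∀ A, MeasurableSet A → A ⊆ s' ∩ Γ → InjOn π A →
      volume (π '' A) ≤ ∫⁻ x in A, a x ∂μH[1] + ENNReal.ofReal (3 * ε) * μH[1] A ∧
      ∫⁻ x in A, a x ∂μH[1] ≤ volume (π '' A) + ENNReal.ofReal (3 * ε) * μH[1] A by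
    obtain ⟨s', -, hs', h⟩ := h
    exact h A hA (fun x hx => ⟨hs' (hAΓ hx), hAΓ hx⟩) hinj
  refine C.cpt.induction_on (p := fun s => ∃ s', MeasurableSet s' ∧ s ⊆ s' ∧
      ∀ A, MeasurableSet A → A ⊆ s' ∩ Γ → InjOn π A →
      volume (π '' A) ≤ ∫⁻ x in A, a x ∂μH[1] + ENNReal.ofReal (3 * ε) * μH[1] A ∧
      ∫⁻ x in A, a x ∂μH[1] ≤ volume (π '' A) + ENNReal.ofReal (3 * ε) * μH[1] A) ?_ ?_ ?_ ?_
  · refine ⟨∅, MeasurableSet.empty, Subset.rfl, ?_⟩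
    intro A _ hA _
    have : A = ∅ := by simpa using hA
    subst this; simp
  · rintro s t hst ⟨t', h1, h2, h3⟩
    exact ⟨t', h1, hst.trans h2, h3⟩
  · rintro s t ⟨s', hs1, hs2, hs3⟩ ⟨t', ht1, ht2, ht3⟩
    refine ⟨s' ∪ t', hs1.union ht1, union_subset_union hs2 ht2, ?_⟩
    intro A hA hAs hinj
    have hB := hs3 (A ∩ s') (hA.inter hs1) (fun x hx => ⟨hx.2, (hAs hx.1).2⟩)
      (hinj.mono inter_subset_left)
    have hD := ht3 (A \ s') (hA.diff hs1)
      (fun x hx => ⟨(hAs hx.1).1.resolve_left hx.2, (hAs hx.1).2⟩) (hinj.mono sdiff_subset)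
    have hdisj : Disjoint (π '' (A ∩ s')) (π '' (A \ s')) := by
      rw [Set.disjoint_left]
      rintro _ ⟨x, hx, rfl⟩ ⟨y, hy, hxy⟩
      have := hinj hy.1 hx.1 hxy
      subst this
      exact hy.2 hx.2
    have hvol : volume (π '' A) = volume (π '' (A ∩ s')) + volume (π '' (A \ s')) := by
      rw [← measure_union hdisj ((hA.diff hs1).image_of_continuousOn_injOn hπc.continuousOn
        (hinj.mono sdiff_subset)), ← image_union, inter_union_sdiff]
    have hIntg : ∫⁻ x in A, a x ∂μH[1] = ∫⁻ x in A ∩ s', a x ∂μH[1] + ∫⁻ x in A \ s', a x ∂μH[1] :=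
      (lintegral_inter_add_sdiff a A hs1).symm
    have hme : (μH[1] : Measure E2) A = μH[1] (A ∩ s') + μH[1] (A \ s') :=
      (measure_inter_add_sdiff A hs1).symm
    rw [hvol, hIntg, hme, mul_add]
    constructor
    · calc _ ≤ _ := add_le_add hB.1 hD.1
        _ = _ := by ring
    · calc _ ≤ _ := add_le_add hB.2 hD.2
        _ = _ := by ring
  · intro x0 hx0
    obtain ⟨U, hU, h1, h2⟩ := C.loc x0 hx0 ε hε
    refine ⟨interior U, mem_nhdsWithin_of_mem_nhds (interior_mem_nhds.2 hU), interior U,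
      isOpen_interior.measurableSet, Subset.rfl, ?_⟩
    intro A hA hAs _
    have hAU : ∀ x ∈ A, x ∈ Γ ∩ U := fun x hx => ⟨(hAs hx).2, interior_subset (hAs hx).1⟩
    set a0 := |⟪ν x0, ev' θ⟫| with ha0
    have haa : ∀ x ∈ A, |(|⟪ν x, ev' θ⟫| - a0)| ≤ ε := by
      intro x hx
      refine (abs_abs_sub_abs_le_abs_sub _ _).trans ?_
      rw [← inner_sub_left]
      refine (abs_real_inner_le_norm _ _).trans ?_
      rw [hev1, mul_one]
      exact h1 x (hAU x hx)
    have a0n : 0 ≤ a0 := abs_nonneg _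
    have hup := upper (A := A) (θ := θ) (k := a0 + 2 * ε) (by positivity) (fun x hx y hy =>
      (perp_est (C.unit x0 hx0) θ (h2 x (hAU x hx) y (hAU y hy))).1)
    have hlo := lower (A := A) (θ := θ) (k := a0 - 2 * ε) (fun x hx y hy =>
      (perp_est (C.unit x0 hx0) θ (h2 x (hAU x hx) y (hAU y hy))).2)
    constructor
    · refine hup.trans ?_
      calc ENNReal.ofReal (a0 + 2 * ε) * μH[1] A
          = ∫⁻ x in A, ENNReal.ofReal (a0 + 2 * ε) ∂μH[1] := by rw [setLIntegral_const]
        _ ≤ ∫⁻ x in A, (a x + ENNReal.ofReal (3 * ε)) ∂μH[1] := by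
            apply setLIntegral_mono (ham.add_const _)
            intro x hx
            simp only [ha]
            rw [← ENNReal.ofReal_add (abs_nonneg _) (by positivity)]
            apply ENNReal.ofReal_le_ofReal
            have := (abs_le.1 (haa x hx)).1
            linarith
        _ = _ := by rw [lintegral_add_right _ measurable_const, setLIntegral_const]
    · calc ∫⁻ x in A, a x ∂μH[1]
          ≤ ∫⁻ x in A, (ENNReal.ofReal (a0 - 2 * ε) + ENNReal.ofReal (3 * ε)) ∂μH[1] := by
            apply setLIntegral_mono measurable_const
            intro x hx
            simp only [ha]
            refine le_trans (ENNReal.ofReal_le_ofReal ?_) ENNReal.ofReal_add_le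
            have := (abs_le.1 (haa x hx)).2
            linarith
        _ = ENNReal.ofReal (a0 - 2 * ε) * μH[1] A + ENNReal.ofReal (3 * ε) * μH[1] A := by
            rw [setLIntegral_const, add_mul]
        _ ≤ _ := by gcongr

lemma proj_eq (C : IsCurve Γ ν) (θ : ℝ) {A : Set E2} (hA : MeasurableSet A)
    (hAΓ : A ⊆ Γ) (hinj : InjOn (fun x : E2 => ⟪x, ev θ⟫) A) :
    ∫⁻ x in A, ENNReal.ofReal |⟪ν x, ev' θ⟫| ∂μH[1] =
      volume ((fun x : E2 => ⟪x, ev θ⟫) '' A) := by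
  have hfin : μH[1] A ≠ ∞ := ((measure_mono hAΓ).trans_lt C.meas_lt_top).ne
  have hlim : ∀ b : ℝ≥0∞, Filter.Tendsto (fun ε : ℝ => b + ENNReal.ofReal (3 * ε) * μH[1] A)
      (nhdsWithin 0 (Ioi 0)) (nhds b) := by
    intro b
    have h1 : Filter.Tendsto (fun ε : ℝ => ENNReal.ofReal (3 * ε)) (nhdsWithin 0 (Ioi 0))
        (nhds 0) := by
      have : Continuous (fun ε : ℝ => ENNReal.ofReal (3 * ε)) :=
        ENNReal.continuous_ofReal.comp (by fun_prop)
      have h := this.tendsto 0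
      simp only [mul_zero, ENNReal.ofReal_zero] at h
      exact h.mono_left nhdsWithin_le_nhds
    have h2 := (ENNReal.Tendsto.mul_const h1 (Or.inr hfin)).const_add b
    simpa using h2
  apply le_antisymm
  · refine ge_of_tendsto (hlim _) ?_
    filter_upwards [self_mem_nhdsWithin] with ε hε using (C.approx θ hε hA hAΓ hinj).2
  · refine ge_of_tendsto (hlim _) ?_
    filter_upwards [self_mem_nhdsWithin] with ε hε using (C.approx θ hε hA hAΓ hinj).1

end IsCurve
/-! ### Superlevel sets, support functions and level lines -/

/-- closed superlevel sets -/
def Kset (Ω : Set E2) (u : E2 → ℝ) (t : ℝ) : Set E2 := {x ∈ closure Ω | t ≤ u x}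

/-- support function of the closed superlevel sets -/
def hsup (Ω : Set E2) (u : E2 → ℝ) (t : ℝ) (v : E2) : ℝ := sSup ((fun x : E2 => ⟪v, x⟫) '' Kset Ω u t)

namespace Setup

variable {Ω : Set E2} {u : E2 → ℝ}

lemma K_cpt (S : Setup Ω u) (t : ℝ) : IsCompact (Kset Ω u t) := by
  have : IsClosed (closure Ω ∩ u ⁻¹' Ici t) := S.cont.preimage_isClosed_of_isClosed isClosed_closure isClosed_Ici
  exact S.cpt.of_isClosed_subset this inter_subset_left

lemma K_sub (S : Setup Ω u) {t : ℝ} (ht : 0 < t) : Kset Ω u t ⊆ Ω := fun _ hx =>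
  S.bdry hx.1 (ht.trans_le hx.2).ne'

lemma K_ne (S : Setup Ω u) {t : ℝ} (ht : 0 < t) (htM : t ≤ maxcl Ω u) : (Kset Ω u t).Nonempty := by
  obtain ⟨x, hx, hm⟩ := S.exists_max (ht.trans_le htM)
  exact ⟨x, subset_closure hx, by rw [hm]; exact htM⟩

lemma le_h (S : Setup Ω u) {t : ℝ} {x : E2} (hx : x ∈ Kset Ω u t) (v : E2) : ⟪v, x⟫ ≤ hsup Ω u t v :=
  le_csSup ((S.K_cpt t).image (by fun_prop)).bddAbove ⟨x, hx, rfl⟩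

lemma h_attain (S : Setup Ω u) {t : ℝ} (ht : 0 < t) (htM : t ≤ maxcl Ω u) (v : E2) :
    ∃ x ∈ Kset Ω u t, ⟪v, x⟫ = hsup Ω u t v :=
  ((S.K_cpt t).image (f := fun x : E2 => ⟪v, x⟫) (by fun_prop)).sSup_mem ((S.K_ne ht htM).image _)

lemma h_cont (S : Setup Ω u) (t : ℝ) : Continuous (hsup Ω u t) := by
  have := (S.K_cpt t).continuous_sSup (f := fun (v x : E2) => ⟪v, x⟫) (by
    simp only [Function.HasUncurry.uncurry, id]; fun_prop)
  exact this

lemma h_homog (S : Setup Ω u) {t : ℝ} (ht : 0 < t) (htM : t ≤ maxcl Ω u) {r : ℝ} (hr : 0 < r)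
    (v : E2) : hsup Ω u t (r • v) = r * hsup Ω u t v := by
  apply le_antisymm
  · obtain ⟨x, hx, he⟩ := S.h_attain ht htM (r • v)
    rw [← he, real_inner_smul_left]
    gcongr
    exact S.le_h hx v
  · obtain ⟨x, hx, he⟩ := S.h_attain ht htM v
    rw [← he, ← real_inner_smul_left]
    exact S.le_h hx _

lemma push_in (S : Setup Ω u) {t : ℝ} {x : E2} (hx : x ∈ Ω) (hxt : t < u x) (v : E2) :
    ∃ η : ℝ, 0 < η ∧ x + η • v ∈ Kset Ω u t := by
  have hc : Continuous (fun η : ℝ => x + η • v) := by fun_prop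
  have hcu : ContinuousAt u x := (S.diff hx).continuousAt
  have h1 : {y | y ∈ Ω ∧ t < u y} ∈ nhds x :=
    Filter.inter_mem (S.op.mem_nhds hx) (hcu.eventually (lt_mem_nhds hxt))
  have h2 : (fun η : ℝ => x + η • v) ⁻¹' {y | y ∈ Ω ∧ t < u y} ∈ nhds 0 := by
    apply hc.continuousAt.preimage_mem_nhds; simpa using h1
  obtain ⟨η, h3, hη⟩ :=
    (Filter.inter_mem (nhdsWithin_le_nhds h2) (self_mem_nhdsWithin (s := Ioi (0 : ℝ)))
      |> Filter.nonempty_of_mem)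
  exact ⟨η, hη, subset_closure h3.1, h3.2.le⟩

lemma h_strict (S : Setup Ω u) {t t' : ℝ} (ht : 0 < t) (htt : t < t') (htM : t' ≤ maxcl Ω u)
    {v : E2} (hv : v ≠ 0) : hsup Ω u t' v < hsup Ω u t v := by
  obtain ⟨x, hx, he⟩ := S.h_attain (ht.trans htt) htM v
  have hxΩ := S.K_sub (ht.trans htt) hx
  obtain ⟨η, hη', hηK⟩ := S.push_in hxΩ (htt.trans_le hx.2) v
  have := S.le_h hηK v
  rw [inner_add_right, he, real_inner_smul_right] at this
  have hp : 0 < ⟪v, v⟫ := real_inner_self_pos.2 hv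
  nlinarith [mul_pos hη' hp]

lemma h_concave (S : Setup Ω u) (v : E2) :
    ConcaveOn ℝ (Ioo 0 (maxcl Ω u)) (fun t => hsup Ω u t v) := by
  refine ⟨convex_Ioo _ _, ?_⟩
  intro t ht s hs a b ha hb hab
  obtain ⟨x, hx, hex⟩ := S.h_attain ht.1 ht.2.le v
  obtain ⟨y, hy, hey⟩ := S.h_attain hs.1 hs.2.le v
  have hxΩ := S.K_sub ht.1 hx
  have hyΩ := S.K_sub hs.1 hy
  have hz : a • x + b • y ∈ Kset Ω u (a • t + b • s) := by
    refine ⟨subset_closure (S.cv hxΩ hyΩ ha hb hab), ?_⟩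
    refine le_trans ?_ (S.phi.concave.2 hxΩ hyΩ ha hb hab)
    simp only [smul_eq_mul]
    have := hx.2; have := hy.2
    gcongr
  have := S.le_h hz v
  simp only [smul_eq_mul] at this ⊢
  rw [inner_add_right, real_inner_smul_right, real_inner_smul_right, hex, hey] at this
  exact this

lemma level_sub (S : Setup Ω u) {t : ℝ} (ht : 0 < t) (htM : t < maxcl Ω u) :
    levelSet Ω u t ⊆ Eu Ω u := by
  rintro x ⟨h1, h2⟩
  rw [S.Eu_eq]
  exact ⟨S.bdry h1 (by rw [h2]; exact ht.ne'), by rw [h2]; exact htM⟩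

lemma measurable_nu (u : E2 → ℝ) : Measurable (nuLevel u) := by
  unfold nuLevel
  exact ((measurable_gradient u).norm.inv.smul (measurable_gradient u)).neg

lemma level_cpt (S : Setup Ω u) (t : ℝ) : IsCompact (levelSet Ω u t) := by
  have : IsClosed (closure Ω ∩ u ⁻¹' {t}) :=
    S.cont.preimage_isClosed_of_isClosed isClosed_closure isClosed_singleton
  exact S.cpt.of_isClosed_subset this inter_subset_left

lemma isCurve (S : Setup Ω u) {t : ℝ} (ht : 0 < t) (htM : t < maxcl Ω u) :
    IsCurve (levelSet Ω u t) (nuLevel u) where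
  cpt := S.level_cpt t
  unit x hx := by
    have := S.grad_ne (S.level_sub ht htM hx)
    rw [nuLevel, norm_neg, norm_smul, norm_inv, norm_norm, inv_mul_cancel₀ (norm_ne_zero_iff.2 this)]
  meas := measurable_nu u
  loc x0 hx0 ε hε := by
    have hE := S.level_sub ht htM hx0
    have hg := S.grad_ne hE
    have hgn := norm_pos_iff.2 hg
    have hnc : ContinuousAt (nuLevel u) x0 := by
      have hgc : ContinuousAt (gradient u) x0 :=
        ((contDiffOn_gradient S.Eu_open S.c2).continuousOn).continuousAt (S.Eu_open.mem_nhds hE)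
      unfold nuLevel
      exact ((hgc.norm.inv₀ hgn.ne').smul hgc).neg
    have hst : HasStrictFDerivAt u (fderiv ℝ u x0) x0 :=
      (S.c2.contDiffAt (S.Eu_open.mem_nhds hE)).hasStrictFDerivAt (by norm_num)
    have h1 := hst.isLittleO.def (mul_pos hε hgn)
    rw [nhds_prod_eq, Filter.eventually_iff, Filter.mem_prod_self_iff] at h1
    obtain ⟨U, hU, h1⟩ := h1
    have h2 : ∀ᶠ x in nhds x0, ‖nuLevel u x - nuLevel u x0‖ ≤ ε := by
      have := Metric.continuousAt_iff'.1 hnc ε hε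
      filter_upwards [this] with x hx
      rw [dist_eq_norm] at hx; exact hx.le
    refine ⟨U ∩ {x | ‖nuLevel u x - nuLevel u x0‖ ≤ ε}, Filter.inter_mem hU h2,
      fun x hx => hx.2.2, ?_⟩
    intro x hx y hy
    have h3 := h1 (Set.mk_mem_prod hx.2.1 hy.2.1)
    rw [mem_ofPred_eq] at h3
    simp only [hx.1.2, hy.1.2, sub_self, zero_sub, norm_neg] at h3
    rw [nuLevel, inner_neg_left, abs_neg, real_inner_smul_left, inner_gradient, abs_mul, abs_inv,
      abs_norm, inv_mul_le_iff₀ hgn]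
    rw [Real.norm_eq_abs] at h3
    linarith

/-- decomposition in a rotated frame -/
lemma frame (x : E2) (θ : ℝ) : x = ⟪x, ev θ⟫ • ev θ + ⟪x, ev' θ⟫ • ev' θ := by
  have hcs := Real.sin_sq_add_cos_sq θ
  have h : ev' θ 0 = -Real.sin θ ∧ ev' θ 1 = Real.cos θ := ⟨rfl, rfl⟩
  apply ext2
  · simp only [inner2, ev_0, ev_1, PiLp.add_apply, PiLp.smul_apply, smul_eq_mul, h.1, h.2]
    linear_combination (-(x 0)) * hcs
  · simp only [inner2, ev_0, ev_1, PiLp.add_apply, PiLp.smul_apply, smul_eq_mul, h.1, h.2]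
    linear_combination (-(x 1)) * hcs

lemma inner_ev_ev' (θ : ℝ) : ⟪ev' θ, ev θ⟫ = 0 := by
  have h : ev' θ 0 = -Real.sin θ ∧ ev' θ 1 = Real.cos θ := ⟨rfl, rfl⟩
  rw [inner2, h.1, h.2, ev_0, ev_1]; ring

/-- one side of a level line -/
def side (Ω : Set E2) (u : E2 → ℝ) (t θ σ : ℝ) : Set E2 :=
  {x ∈ levelSet Ω u t | fderiv ℝ u x (σ • ev' θ) < 0}

lemma side_inj (S : Setup Ω u) {t : ℝ} (ht : 0 < t) (htM : t < maxcl Ω u) (θ : ℝ) {σ : ℝ}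
    (hσ : σ * σ = 1) : InjOn (fun x : E2 => ⟪x, ev θ⟫) (side Ω u t θ σ) := by
  have key : ∀ x ∈ side Ω u t θ σ, ∀ y ∈ side Ω u t θ σ, ⟪x, ev θ⟫ = ⟪y, ev θ⟫ →
      σ * ⟪y - x, ev' θ⟫ ≤ 0 := by
    intro x hx y hy hxy
    by_contra hc
    push Not at hc
    have hxE := (S.level_sub ht htM hx.1).1
    have hyE := (S.level_sub ht htM hy.1).1
    have hg := S.grad_ineq hxE hyE
    rw [hx.1.2, hy.1.2] at hg
    have hd : y - x = (σ * ⟪y - x, ev' θ⟫) • (σ • ev' θ) := by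
      conv_lhs => rw [frame (y - x) θ]
      rw [inner_sub_left y x (ev θ), hxy, sub_self, zero_smul, zero_add, smul_smul]
      congr 1
      linear_combination (-⟪y - x, ev' θ⟫) * hσ
    rw [hd, map_smul, smul_eq_mul] at hg
    have := hx.2
    nlinarith
  intro x hx y hy hxy
  have h1 := key x hx y hy hxy
  have h2 := key y hy x hx hxy.symm
  have h3 : ⟪y - x, ev' θ⟫ = 0 := by
    have h4 : ⟪x - y, ev' θ⟫ = - ⟪y - x, ev' θ⟫ := by rw [← inner_neg_left, neg_sub]
    rw [h4] at h2
    have h5 : σ * ⟪y - x, ev' θ⟫ = 0 := by linarith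
    rcases mul_eq_zero.1 h5 with h | h
    · rw [h] at hσ; norm_num at hσ
    · exact h
  have h6 := frame (y - x) θ
  have h7 : ⟪x, ev θ⟫ = ⟪y, ev θ⟫ := hxy
  rw [h3, inner_sub_left, h7, sub_self, zero_smul, zero_smul, add_zero] at h6
  exact (sub_eq_zero.1 h6).symm

lemma strict_seg (S : Setup Ω u) {t : ℝ} (ht : 0 < t) {m a f : E2} (hm : m ∈ Ω) (hmt : t < u m)
    (ha : a ∈ Kset Ω u t) {r : ℝ} (h1 : ⟪f, m⟫ ≤ r) (h2 : r < ⟪f, a⟫) :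
    ∃ z ∈ Ω, t < u z ∧ ⟪f, z⟫ = r := by
  have haΩ := S.K_sub ht ha
  set s := (r - ⟪f, m⟫) / (⟪f, a⟫ - ⟪f, m⟫) with hs
  have hpos : 0 < ⟪f, a⟫ - ⟪f, m⟫ := by linarith
  have hs0 : 0 ≤ s := div_nonneg (by linarith) hpos.le
  have hs1 : s < 1 := by rw [hs, div_lt_one hpos]; linarith
  refine ⟨(1 - s) • m + s • a, S.cv hm haΩ (by linarith) hs0 (by ring), ?_, ?_⟩
  · have := S.phi.concave.2 hm haΩ (by linarith : 0 ≤ 1 - s) hs0 (by ring)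
    refine lt_of_lt_of_le ?_ this
    simp only [smul_eq_mul]
    have h3 := ha.2
    have h4 : s * t ≤ s * u a := by gcongr
    have h5 : (1 - s) * t < (1 - s) * u m := by
      apply mul_lt_mul_of_pos_left hmt; linarith
    linarith
  · rw [inner_add_right, real_inner_smul_right, real_inner_smul_right]
    have : s * (⟪f, a⟫ - ⟪f, m⟫) = r - ⟪f, m⟫ := by rw [hs]; field_simp
    linarith

lemma side_image (S : Setup Ω u) {t : ℝ} (ht : 0 < t) (htM : t < maxcl Ω u) (θ : ℝ) {σ : ℝ}
    (hσ : σ * σ = 1) :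
    volume ((fun x : E2 => ⟪x, ev θ⟫) '' side Ω u t θ σ) =
      ENNReal.ofReal (hsup Ω u t (ev θ) + hsup Ω u t (-ev θ)) := by
  have hup : (fun x : E2 => ⟪x, ev θ⟫) '' side Ω u t θ σ ⊆
      Icc (-hsup Ω u t (-ev θ)) (hsup Ω u t (ev θ)) := by
    rintro _ ⟨x, hx, rfl⟩
    have hxK : x ∈ Kset Ω u t := ⟨hx.1.1, hx.1.2.ge⟩
    have h1 := S.le_h hxK (ev θ)
    have h2 := S.le_h hxK (-ev θ)
    rw [inner_neg_left] at h2
    simp only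
    rw [real_inner_comm]
    exact ⟨by linarith, h1⟩
  have hlo : Ioo (-hsup Ω u t (-ev θ)) (hsup Ω u t (ev θ)) ⊆
      (fun x : E2 => ⟪x, ev θ⟫) '' side Ω u t θ σ := by
    intro r hr
    obtain ⟨m, hm, hmM⟩ := S.exists_max (ht.trans htM)
    have hmt : t < u m := by rw [hmM]; exact htM
    obtain ⟨z, hz, hzt, hzr⟩ : ∃ z ∈ Ω, t < u z ∧ ⟪ev θ, z⟫ = r := by
      rcases le_total ⟪ev θ, m⟫ r with h | h
      · obtain ⟨a, ha, hae⟩ := S.h_attain ht htM.le (ev θ)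
        exact S.strict_seg ht hm hmt ha h (by rw [hae]; exact hr.2)
      · obtain ⟨a, ha, hae⟩ := S.h_attain ht htM.le (-ev θ)
        obtain ⟨z, h1, h2, h3⟩ := S.strict_seg ht hm hmt ha (f := -ev θ) (r := -r)
          (by rw [inner_neg_left]; linarith) (by rw [hae]; linarith [hr.1])
        exact ⟨z, h1, h2, by rw [inner_neg_left] at h3; linarith⟩
    set e : E2 := σ • ev' θ with he
    have hene : ‖e‖ = 1 := by
      have h : ev' θ 0 = -Real.sin θ ∧ ev' θ 1 = Real.cos θ := ⟨rfl, rfl⟩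
      have h2 := normsq2 e
      simp only [he, PiLp.smul_apply, smul_eq_mul, h.1, h.2] at h2
      have h3 : ‖e‖ ^ 2 = 1 := by
        rw [he, h2]; linear_combination (σ * σ) * Real.sin_sq_add_cos_sq θ + hσ
      nlinarith [norm_nonneg e]
    -- the ray
    have hT : IsCompact ({τ : ℝ | 0 ≤ τ} ∩ (fun τ : ℝ => z + τ • e) ⁻¹' Kset Ω u t) := by
      have hcl : IsClosed ({τ : ℝ | 0 ≤ τ} ∩ (fun τ : ℝ => z + τ • e) ⁻¹' Kset Ω u t) :=
        isClosed_Ici.inter ((S.K_cpt t).isClosed.preimage (by fun_prop))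
      obtain ⟨R, hR⟩ := (S.K_cpt t).isBounded.exists_norm_le
      refine (isCompact_Icc (a := (0 : ℝ)) (b := R + ‖z‖)).of_isClosed_subset hcl ?_
      rintro τ ⟨h1, h2⟩
      refine ⟨h1, ?_⟩
      have h3 := hR _ h2
      have h4 : ‖τ • e‖ = τ := by rw [norm_smul, hene, mul_one, Real.norm_of_nonneg h1]
      have h5 : ‖τ • e‖ ≤ ‖z + τ • e‖ + ‖z‖ := by
        have := norm_sub_le (z + τ • e) z
        rwa [add_sub_cancel_left] at this
      linarith
    obtain ⟨τ, ⟨hτ0, hτK⟩, hτmax⟩ := hT.exists_isGreatest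
      ⟨0, le_refl (0 : ℝ), by
        have hzK : z ∈ Kset Ω u t := ⟨subset_closure hz, hzt.le⟩
        simpa using hzK⟩
    set y := z + τ • e with hy
    have hτ0' : 0 ≤ τ := hτ0
    have hyK : y ∈ Kset Ω u t := hτK
    have hyΩ := S.K_sub ht hyK
    have hyt : u y = t := by
      by_contra hne
      have hlt : t < u y := lt_of_le_of_ne hyK.2 (Ne.symm hne)
      obtain ⟨η, hη', hηK⟩ := S.push_in hyΩ hlt e
      have h5 : τ + η ∈ {τ : ℝ | 0 ≤ τ} ∩ (fun τ : ℝ => z + τ • e) ⁻¹' Kset Ω u t := by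
        refine ⟨show 0 ≤ τ + η by positivity, ?_⟩
        have : z + (τ + η) • e = y + η • e := by rw [hy, add_smul, add_assoc]
        simp only [mem_preimage, this]
        exact hηK
      have := hτmax h5
      linarith
    refine ⟨y, ⟨⟨subset_closure hyΩ, hyt⟩, ?_⟩, ?_⟩
    · have := S.grad_ineq hyΩ hz
      have hzy : z - y = (-τ) • e := by rw [hy, neg_smul]; abel
      rw [hzy, map_smul, smul_eq_mul, hyt] at this
      by_contra hc
      push Not at hc
      nlinarith [mul_nonneg hτ0' hc]
    · simp only
      rw [hy, inner_add_left, he, real_inner_smul_left, real_inner_smul_left, inner_ev_ev',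
        real_inner_comm, hzr]
      ring
  have hw : hsup Ω u t (ev θ) + hsup Ω u t (-ev θ) =
      hsup Ω u t (ev θ) - -hsup Ω u t (-ev θ) := by ring
  rw [hw]
  apply le_antisymm
  · refine (measure_mono hup).trans ?_
    rw [Real.volume_Icc]
  · refine le_trans ?_ (measure_mono hlo)
    rw [Real.volume_Ioo]

lemma level_width (S : Setup Ω u) {t : ℝ} (ht : 0 < t) (htM : t < maxcl Ω u) (θ : ℝ) :
    ∫⁻ x in levelSet Ω u t, ENNReal.ofReal |⟪nuLevel u x, ev' θ⟫| ∂μH[1] =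
      ENNReal.ofReal (2 * (hsup Ω u t (ev θ) + hsup Ω u t (-ev θ))) := by
  have C := S.isCurve ht htM
  have hm : ∀ σ, MeasurableSet (side Ω u t θ σ) := fun σ =>
    (S.level_cpt t).isClosed.measurableSet.inter
      (measurableSet_lt (measurable_fderiv_apply_const ℝ u _) measurable_const)
  have hs : ∀ σ, side Ω u t θ σ ⊆ levelSet Ω u t := fun σ x hx => hx.1
  have e : ∀ σ : ℝ, σ * σ = 1 → ∫⁻ x in side Ω u t θ σ, ENNReal.ofReal |⟪nuLevel u x, ev' θ⟫| ∂μH[1] =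
      ENNReal.ofReal (hsup Ω u t (ev θ) + hsup Ω u t (-ev θ)) := fun σ hσ => by
    rw [C.proj_eq θ (hm σ) (hs σ) (S.side_inj ht htM θ hσ), S.side_image ht htM θ hσ]
  have e1 := e 1 (by norm_num)
  have e2 := e (-1) (by norm_num)
  have hdisj : Disjoint (side Ω u t θ 1) (side Ω u t θ (-1)) := by
    rw [Set.disjoint_left]
    intro x h1 h2
    have h1 := h1.2
    have h2 := h2.2
    rw [map_smul, smul_eq_mul] at h1 h2
    linarith
  have hsplit : ∫⁻ x in levelSet Ω u t, ENNReal.ofReal |⟪nuLevel u x, ev' θ⟫| ∂μH[1] =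
      ∫⁻ x in side Ω u t θ 1 ∪ side Ω u t θ (-1), ENNReal.ofReal |⟪nuLevel u x, ev' θ⟫| ∂μH[1] := by
    rw [← lintegral_inter_add_sdiff _ (levelSet Ω u t) ((hm 1).union (hm (-1))),
      inter_eq_self_of_subset_right (union_subset (hs 1) (hs (-1)))]
    convert add_zero _
    rw [setLIntegral_eq_zero_iff ((S.level_cpt t).isClosed.measurableSet.diff ((hm 1).union (hm (-1))))]
    · filter_upwards with x
      rintro ⟨hx, hn⟩
      have h1 : ¬ fderiv ℝ u x ((1 : ℝ) • ev' θ) < 0 := fun h => hn (Or.inl ⟨hx, h⟩)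
      have h2 : ¬ fderiv ℝ u x ((-1 : ℝ) • ev' θ) < 0 := fun h => hn (Or.inr ⟨hx, h⟩)
      rw [map_smul, smul_eq_mul] at h1 h2
      have h3 : fderiv ℝ u x (ev' θ) = 0 := by linarith
      rw [nuLevel, inner_neg_left, real_inner_smul_left, inner_gradient, h3]; simp
    · exact (continuous_abs.measurable.comp ((measurable_nu u).inner_const)).ennreal_ofReal
  rw [hsplit, lintegral_union (hm _) hdisj, e1, e2, ← two_mul, ENNReal.ofReal_mul two_pos.le]
  simp

end Setup
/-! ### The anisotropic perimeter of superlevel sets -/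

lemma kap_pos {H : E2 → ℝ} (hH : IsAnisoNorm H) : 0 < kap H := by
  unfold kap
  refine div_pos ?_ two_pos
  refine intervalIntegral.intervalIntegral_pos_of_pos
    (((cH_cont hH).mul (qH_cont hH)).intervalIntegrable _ _) ?_ (by linarith [Real.pi_pos])
  intro θ
  exact mul_pos (cH_pos hH θ) (qH_pos hH θ)

lemma continuous_ev : Continuous ev := contDiff_ev.continuous

namespace Setup

variable {Ω : Set E2} {u : E2 → ℝ} {H : E2 → ℝ}

lemma width_nonneg (S : Setup Ω u) {t : ℝ} (ht : 0 < t) (htM : t ≤ maxcl Ω u) (v : E2) :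
    0 ≤ hsup Ω u t v + hsup Ω u t (-v) := by
  obtain ⟨x, hx⟩ := S.K_ne ht htM
  have h1 := S.le_h hx v
  have h2 := S.le_h hx (-v)
  rw [inner_neg_left] at h2
  linarith

lemma lambda_eq (S : Setup Ω u) (hH : IsAnisoNorm H) {t : ℝ} (ht : 0 < t) (htM : t < maxcl Ω u) :
    lambdaH H Ω u t = ∫ θ in (-Real.pi)..Real.pi, hsup Ω u t (-ev θ) * qH H θ := by
  have hpi := Real.pi_pos
  have hle : -Real.pi ≤ Real.pi := by linarith
  have C := S.isCurve ht htM
  have : IsFiniteMeasure ((μH[1] : Measure E2).restrict (levelSet Ω u t)) :=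
    ⟨by rw [Measure.restrict_apply_univ]; exact C.meas_lt_top⟩
  have hc1 : Continuous fun θ => hsup Ω u t (ev θ) := (S.h_cont t).comp continuous_ev
  have hc2 : Continuous fun θ => hsup Ω u t (-ev θ) := (S.h_cont t).comp continuous_ev.neg
  have hq := qH_cont hH
  have hq0 : ∀ θ, 0 ≤ qH H θ := fun θ => (qH_pos hH θ).le
  have hHm : Measurable fun x => H (nuLevel u x) := (H_cont hH).measurable.comp (measurable_nu u)
  have hinner : Measurable (fun p : E2 × ℝ => |⟪nuLevel u p.1, ev' p.2⟫|) :=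
    continuous_abs.measurable.comp
      (((measurable_nu u).comp measurable_fst).inner (continuous_ev'.measurable.comp measurable_snd))
  have e1 : ∀ ξ : E2, ENNReal.ofReal (H ξ) = ∫⁻ θ in Ioc (-Real.pi) Real.pi,
      ENNReal.ofReal |⟪ξ, ev' θ⟫| * ENNReal.ofReal (qH H θ / 4) := by
    intro ξ
    have hcont : Continuous fun θ => |⟪ξ, ev' θ⟫| * (qH H θ / 4) := by
      have := continuous_ev'
      fun_prop
    have h4 : H ξ = ∫ θ in (-Real.pi)..Real.pi, |⟪ξ, ev' θ⟫| * (qH H θ / 4) := by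
      have := zonoid hH ξ
      have h5 : ∫ θ in (-Real.pi)..Real.pi, |⟪ξ, ev' θ⟫| * (qH H θ / 4) =
          (∫ θ in (-Real.pi)..Real.pi, |⟪ξ, ev' θ⟫| * qH H θ) / 4 := by
        rw [← intervalIntegral.integral_div]
        congr 1; funext θ; ring
      rw [h5, this]; ring
    rw [h4, intervalIntegral.integral_of_le hle, ofReal_integral_eq_lintegral_ofReal]
    · congr 1; funext θ; rw [ENNReal.ofReal_mul (abs_nonneg _)]
    · exact (hcont.intervalIntegrable _ _).1
    · filter_upwards with θ
      exact mul_nonneg (abs_nonneg _) (div_nonneg (hq0 θ) (by norm_num))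
  have e2 : ∫⁻ x in levelSet Ω u t, ENNReal.ofReal (H (nuLevel u x)) ∂μH[1] =
      ∫⁻ θ in Ioc (-Real.pi) Real.pi,
        ENNReal.ofReal ((hsup Ω u t (ev θ) + hsup Ω u t (-ev θ)) * qH H θ / 2) := by
    simp_rw [e1]
    rw [lintegral_lintegral_swap]
    · congr 1; funext θ
      rw [lintegral_mul_const', S.level_width ht htM θ, ← ENNReal.ofReal_mul]
      · congr 1; ring
      · have := S.width_nonneg ht htM.le (ev θ); positivity
      · exact ENNReal.ofReal_ne_top
    · have : Measurable (fun p : E2 × ℝ => ENNReal.ofReal |⟪nuLevel u p.1, ev' p.2⟫| *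
          ENNReal.ofReal (qH H p.2 / 4)) :=
        hinner.ennreal_ofReal.mul ((hq.measurable.comp measurable_snd).div_const 4).ennreal_ofReal
      exact this.aemeasurable
  have e3 : lambdaH H Ω u t = ∫ θ in (-Real.pi)..Real.pi,
      (hsup Ω u t (ev θ) + hsup Ω u t (-ev θ)) * qH H θ / 2 := by
    rw [lambdaH, integral_eq_lintegral_of_nonneg_ae (by filter_upwards with x using hH.nonneg _)
      hHm.aestronglyMeasurable, e2, intervalIntegral.integral_of_le hle,
      integral_eq_lintegral_of_nonneg_ae]
    · filter_upwards with θ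
      have := S.width_nonneg ht htM.le (ev θ)
      have := hq0 θ
      simp only [Pi.zero_apply]
      positivity
    · exact (((hc1.add hc2).mul hq).div_const 2).aestronglyMeasurable
  set g : ℝ → ℝ := fun θ => hsup Ω u t (-ev θ) * qH H θ with hg
  have hgpi : ∀ θ, g (θ + Real.pi) = hsup Ω u t (ev θ) * qH H θ := by
    intro θ; simp only [hg]; rw [ev_add_pi, neg_neg, qH_periodic hH]
  have hgper : Function.Periodic g (2 * Real.pi) := by
    intro θ
    have : θ + 2 * Real.pi = (θ + Real.pi) + Real.pi := by ring
    rw [this, hgpi, ev_add_pi, qH_periodic hH]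
  have hgc : Continuous g := hc2.mul hq
  have e4 : ∫ θ in (-Real.pi)..Real.pi, hsup Ω u t (ev θ) * qH H θ = ∫ θ in (-Real.pi)..Real.pi, g θ := by
    simp_rw [← hgpi]
    rw [intervalIntegral.integral_comp_add_right]
    have := hgper.intervalIntegral_add_eq (-Real.pi) 0
    have h1 : -Real.pi + 2 * Real.pi = Real.pi := by ring
    rw [h1] at this
    rw [this]
    congr 1 <;> ring
  rw [e3]
  have e5 : ∀ θ, (hsup Ω u t (ev θ) + hsup Ω u t (-ev θ)) * qH H θ / 2 =
      (hsup Ω u t (ev θ) * qH H θ) / 2 + g θ / 2 := by intro θ; simp only [hg]; ring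
  simp_rw [e5]
  have hi1 : IntervalIntegrable (fun θ => hsup Ω u t (ev θ) * qH H θ / 2) volume
      (-Real.pi) Real.pi := ((hc1.mul hq).div_const 2).intervalIntegrable _ _
  rw [intervalIntegral.integral_add hi1 ((hgc.div_const 2).intervalIntegrable _ _), intervalIntegral.integral_div,
    intervalIntegral.integral_div, e4]
  ring

lemma hq_int (S : Setup Ω u) (hH : IsAnisoNorm H) (t : ℝ) :
    IntervalIntegrable (fun θ => hsup Ω u t (-ev θ) * qH H θ) volume (-Real.pi) Real.pi :=
  (((S.h_cont t).comp continuous_ev.neg).mul (qH_cont hH)).intervalIntegrable _ _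

lemma lambda_strict (S : Setup Ω u) (hH : IsAnisoNorm H) {t t' : ℝ} (ht : 0 < t) (htt : t < t')
    (htM : t' < maxcl Ω u) : lambdaH H Ω u t' < lambdaH H Ω u t := by
  rw [S.lambda_eq hH ht (htt.trans htM), S.lambda_eq hH (ht.trans htt) htM, ← sub_pos,
    ← intervalIntegral.integral_sub (S.hq_int hH _) (S.hq_int hH _)]
  refine intervalIntegral.intervalIntegral_pos_of_pos ((S.hq_int hH _).sub (S.hq_int hH _)) ?_
    (by linarith [Real.pi_pos])
  intro θ
  have := S.h_strict ht htt htM.le (neg_ne_zero.2 (ev_ne θ))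
  rw [← sub_mul]
  exact mul_pos (by linarith) (qH_pos hH θ)

lemma lambda_concave (S : Setup Ω u) (hH : IsAnisoNorm H) :
    ConcaveOn ℝ (Ioo 0 (maxcl Ω u)) (lambdaH H Ω u) := by
  refine ⟨convex_Ioo _ _, ?_⟩
  intro t ht s hs a b ha hb hab
  have hm := convex_Ioo 0 (maxcl Ω u) ht hs ha hb hab
  rw [S.lambda_eq hH ht.1 ht.2, S.lambda_eq hH hs.1 hs.2, S.lambda_eq hH hm.1 hm.2]
  simp only [smul_eq_mul]
  rw [← intervalIntegral.integral_const_mul, ← intervalIntegral.integral_const_mul,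
    ← intervalIntegral.integral_add ((S.hq_int hH _).const_mul _) ((S.hq_int hH _).const_mul _)]
  refine intervalIntegral.integral_mono_on (by linarith [Real.pi_pos])
    (((S.hq_int hH _).const_mul _).add ((S.hq_int hH _).const_mul _)) (S.hq_int hH _) ?_
  intro θ _
  have := (S.h_concave (-ev θ)).2 ht hs ha hb hab
  simp only [smul_eq_mul] at this
  have hq := (qH_pos hH θ).le
  calc _ = (a * hsup Ω u t (-ev θ) + b * hsup Ω u s (-ev θ)) * qH H θ := by ring
    _ ≤ _ := by gcongr

/-! ### The gradient image -/

lemma grad_image (S : Setup Ω u) {t t' : ℝ} (ht : 0 < t) (htt : t < t') (htM : t' < maxcl Ω u) {p : E2}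
    (hp : p ≠ 0) (hlt : (hsup Ω u t (-p) - hsup Ω u t' (-p)) / (t' - t) < 1) :
    p ∈ gradient u '' {x ∈ Eu Ω u | t < u x} := by
  rw [div_lt_one (by linarith)] at hlt
  have hcont : ContinuousOn (fun x : E2 => u x - ⟪p, x⟫) (Kset Ω u t) :=
    (S.cont.mono (fun x hx => hx.1)).sub (by fun_prop)
  obtain ⟨x, hx, hmax⟩ := (S.K_cpt t).exists_isMaxOn (S.K_ne ht (htt.trans htM).le) hcont
  obtain ⟨y, hy, hye⟩ := S.h_attain (ht.trans htt) htM.le (-p)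
  have hxΩ := S.K_sub ht hx
  have hxy : u y - ⟪p, y⟫ ≤ u x - ⟪p, x⟫ := hmax (⟨hy.1, htt.le.trans hy.2⟩ : y ∈ Kset Ω u t)
  have hxh := S.le_h hx (-p)
  rw [inner_neg_left] at hye hxh
  have hyt := hy.2
  have hxt : t < u x := by
    by_contra hc; push Not at hc; linarith
  have hcu : ContinuousAt u x := (S.diff hxΩ).continuousAt
  have hloc : IsLocalMax (fun x : E2 => u x - ⟪p, x⟫) x := by
    filter_upwards [S.op.mem_nhds hxΩ, hcu.eventually (lt_mem_nhds hxt)] with z h1 h2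
    exact hmax (⟨subset_closure h1, h2.le⟩ : z ∈ Kset Ω u t)
  have hder : HasFDerivAt (fun x : E2 => u x - ⟪p, x⟫) (fderiv ℝ u x - innerSL ℝ p) x :=
    (S.diff hxΩ).hasFDerivAt.sub (innerSL ℝ p).hasFDerivAt
  have h0 := hloc.hasFDerivAt_eq_zero hder
  have hg : gradient u x = p := by
    apply ext_inner_right ℝ
    intro v
    rw [inner_gradient]
    have := congrArg (fun L : E2 →L[ℝ] ℝ => L v) h0
    simp at this
    linarith
  refine ⟨x, ⟨?_, hxt⟩, hg⟩
  rw [S.Eu_eq]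
  refine ⟨hxΩ, lt_of_le_of_ne (S.le_max hx.1) ?_⟩
  intro hM
  exact hp (by rw [← hg]; exact S.grad_eq_zero hxΩ hM)

/-- mass of the anisotropic Monge-Ampere measure of the superlevel set -/
def mass (H : E2 → ℝ) (Ω : Set E2) (u : E2 → ℝ) (t : ℝ) : ℝ≥0∞ :=
  ∫⁻ x in {x ∈ Eu Ω u | t < u x}, ENNReal.ofReal (detH H u x)

lemma superE_open (S : Setup Ω u) (t : ℝ) : IsOpen {x ∈ Eu Ω u | t < u x} :=
  ((S.cont.mono subset_closure).mono (fun _ hx => hx.1)).isOpen_inter_preimage S.Eu_open isOpen_Ioi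

lemma calib {c D y : ℝ} (hc : 0 < c) (hD : 0 < D) (hy : 0 < y) :
    3 * c / y ^ 2 - 2 * D / y ^ 3 ≤ c ^ 3 / D ^ 2 := by
  rw [← sub_nonneg]
  have : c ^ 3 / D ^ 2 - (3 * c / y ^ 2 - 2 * D / y ^ 3) =
      (c * y - D) ^ 2 * (c * y + 2 * D) / (D ^ 2 * y ^ 3) := by
    field_simp; ring
  rw [this]; positivity

lemma mass_ge (S : Setup Ω u) (hH : IsAnisoNorm H) {t t' : ℝ} (ht : 0 < t) (htt : t < t')
    (htM : t' < maxcl Ω u) :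
    ENNReal.ofReal (4 * kap H ^ 3 * (t' - t) ^ 2 / (lambdaH H Ω u t - lambdaH H Ω u t') ^ 2) ≤
      mass H Ω u t := by
  have hδ : 0 < t' - t := by linarith
  set D : E2 → ℝ := fun p => (hsup Ω u t (-p) - hsup Ω u t' (-p)) / (t' - t) with hD
  have hDc : Continuous D :=
    (((S.h_cont t).comp continuous_neg).sub ((S.h_cont t').comp continuous_neg)).div_const _
  have hDh : ∀ r : ℝ, 0 < r → ∀ x, D (r • x) = r * D x := by
    intro r hr x
    simp only [hD]
    rw [← smul_neg, S.h_homog ht (htt.trans htM).le hr, S.h_homog (ht.trans htt) htM.le hr]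
    ring
  have hDp : ∀ x, x ≠ 0 → 0 < D x := fun x hx =>
    div_pos (by linarith [S.h_strict ht htt htM.le (neg_ne_zero.2 hx)]) hδ
  have hpa := polar_area hH hDc hDh hDp
  have hPm : MeasurableSet {p : E2 | p ≠ 0 ∧ D p < 1} :=
    (isOpen_ne.inter (isOpen_lt hDc continuous_const)).measurableSet
  have hw := wcv (measurable_gradient u) (S.superE_open t).measurableSet (fun x hx =>
      ((contDiffOn_gradient S.Eu_open S.c2).contDiffAt (S.Eu_open.mem_nhds hx.1)).differentiableAt
        (by norm_num)) hPm (fun p hp => S.grad_image ht htt htM hp.1 hp.2)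
      (measurable_dethess (Fani H)).ennreal_ofReal
  rw [hpa] at hw
  have hm : ∫⁻ x in {x ∈ Eu Ω u | t < u x}, ENNReal.ofReal |(fderiv ℝ (gradient u) x).det| *
      ENNReal.ofReal (hessian (Fani H) (gradient u x)).det = mass H Ω u t := by
    unfold mass
    refine setLIntegral_congr_fun (S.superE_open t).measurableSet ?_
    intro x hx
    simp only
    rw [det_fderiv_gradient S.Eu_open S.c2 hx.1, abs_of_nonneg (S.det_nonneg hx.1),
      ← ENNReal.ofReal_mul (S.det_nonneg hx.1), detH, mul_comm]
  rw [hm] at hw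
  refine le_trans (ENNReal.ofReal_le_ofReal ?_) hw
  -- the one dimensional inequality
  have hk := kap_pos hH
  set Λ := lambdaH H Ω u t - lambdaH H Ω u t' with hΛ
  have hΛp : 0 < Λ := sub_pos.2 (S.lambda_strict hH ht htt htM)
  set y := Λ / (t' - t) / (2 * kap H) with hy
  have hyp : 0 < y := by positivity
  have hq := qH_cont hH
  have hcc := cH_cont hH
  have hevc := continuous_ev
  have hDec : Continuous fun θ => D (ev θ) := hDc.comp continuous_ev
  have hL : ∫ θ in (-Real.pi)..Real.pi, D (ev θ) * qH H θ = Λ / (t' - t) := by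
    rw [hΛ, S.lambda_eq hH ht (htt.trans htM), S.lambda_eq hH (ht.trans htt) htM,
      ← intervalIntegral.integral_sub (S.hq_int hH _) (S.hq_int hH _),
      ← intervalIntegral.integral_div]
    congr 1; funext θ; simp only [hD]; ring
  have hK : ∫ θ in (-Real.pi)..Real.pi, cH H θ * qH H θ = 2 * kap H := by unfold kap; ring
  have hDne : ∀ θ, D (ev θ) ≠ 0 := fun θ => (hDp _ (ev_ne θ)).ne'
  have hmono : ∫ θ in (-Real.pi)..Real.pi, (3 / (2 * y ^ 2) * (cH H θ * qH H θ) -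
      1 / y ^ 3 * (D (ev θ) * qH H θ)) ≤
      ∫ θ in (-Real.pi)..Real.pi, cH H θ ^ 3 * qH H θ / (2 * D (ev θ) ^ 2) := by
    apply intervalIntegral.integral_mono_on (by linarith [Real.pi_pos])
    · exact Continuous.intervalIntegrable (by fun_prop) _ _
    · apply Continuous.intervalIntegrable
      refine Continuous.div (by fun_prop) (by fun_prop) ?_
      intro θ; have := hDne θ; positivity
    · intro θ _
      have h1 := calib (cH_pos hH θ) (hDp _ (ev_ne θ)) hyp
      have h2 := (qH_pos hH θ).le
      have h3 := mul_le_mul_of_nonneg_right h1 (by positivity : 0 ≤ qH H θ / 2)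
      have hne := hDne θ
      calc _ = (3 * cH H θ / y ^ 2 - 2 * D (ev θ) / y ^ 3) * (qH H θ / 2) := by
            field_simp
        _ ≤ _ := h3
        _ = _ := by field_simp
  refine le_trans (le_of_eq ?_) hmono
  rw [intervalIntegral.integral_sub (Continuous.intervalIntegrable (by fun_prop) _ _)
    (Continuous.intervalIntegrable (by fun_prop) _ _), intervalIntegral.integral_const_mul,
    intervalIntegral.integral_const_mul, hL, hK, hy]
  have := hδ.ne'
  field_simp
  ring

end Setup
/-! ### The rearrangement and the conclusion -/

namespace Setup

variable {Ω : Set E2} {u : E2 → ℝ} {H : E2 → ℝ}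

lemma lambda_nonneg (hH : IsAnisoNorm H) (Ω : Set E2) (u : E2 → ℝ) (t : ℝ) : 0 ≤ lambdaH H Ω u t :=
  integral_nonneg (fun _ => hH.nonneg _)

lemma lambda_zero_of_gt (S : Setup Ω u) {t : ℝ} (ht : maxcl Ω u < t) : lambdaH H Ω u t = 0 := by
  have : levelSet Ω u t = ∅ := by
    rw [eq_empty_iff_forall_notMem]
    rintro x ⟨h1, h2⟩
    have := S.le_max h1
    linarith
  rw [lambdaH, this]; simp

lemma lambda_zero (S : Setup Ω u) (hH : IsAnisoNorm H) (hM : 0 < maxcl Ω u) {t : ℝ}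
    (ht : maxcl Ω u ≤ t) : lambdaH H Ω u t = 0 := by
  rcases ht.lt_or_eq with h | h
  · exact S.lambda_zero_of_gt h
  · rw [lambdaH]
    apply setIntegral_eq_zero_of_forall_eq_zero
    rintro x ⟨h1, h2⟩
    have hx : x ∈ Ω := S.bdry h1 (by rw [h2, ← h]; exact hM.ne')
    rw [nuLevel, S.grad_eq_zero hx (by rw [h2, h]), smul_zero, neg_zero, H_zero hH]

lemma diamond_zero {s : ℝ} (h : ∀ t > 0, lambdaH H Ω u t < s) : diamondRe H Ω u s = 0 := by
  have hsub : {t : ℝ | 0 ≤ t ∧ s ≤ lambdaH H Ω u t} ⊆ {0} := by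
    rintro t ⟨h0, h1⟩
    by_contra hc
    have := h t (lt_of_le_of_ne h0 (Ne.symm hc))
    linarith
  unfold diamondRe
  rcases subset_singleton_iff_eq.1 hsub with h | h
  · rw [h]; exact Real.sSup_empty
  · rw [h]; simp

lemma lambda_pos (S : Setup Ω u) (hH : IsAnisoNorm H) {t : ℝ} (ht : t ∈ Ioo 0 (maxcl Ω u)) :
    0 < lambdaH H Ω u t := by
  have h := S.lambda_strict hH ht.1 (t' := (t + maxcl Ω u) / 2) (by linarith [ht.2]) (by linarith [ht.2])
  exact (lambda_nonneg hH Ω u _).trans_lt h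

lemma diamond_lambda (S : Setup Ω u) (hH : IsAnisoNorm H) {t : ℝ} (ht : t ∈ Ioo 0 (maxcl Ω u)) :
    diamondRe H Ω u (lambdaH H Ω u t) = t := by
  apply IsGreatest.csSup_eq
  refine ⟨⟨ht.1.le, le_refl _⟩, ?_⟩
  rintro t' ⟨h0, h1⟩
  by_contra hc
  push Not at hc
  rcases lt_or_ge t' (maxcl Ω u) with h | h
  · linarith [S.lambda_strict hH ht.1 hc h]
  · have := S.lambda_zero hH (ht.1.trans ht.2) h
    linarith [S.lambda_pos hH ht]

lemma diamond_max (S : Setup Ω u) (hH : IsAnisoNorm H) (hM : 0 < maxcl Ω u) {s : ℝ} (hs : 0 < s)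
    (h : ∀ t ∈ Ioo 0 (maxcl Ω u), s < lambdaH H Ω u t) : diamondRe H Ω u s = maxcl Ω u := by
  have hub : ∀ t ∈ {t : ℝ | 0 ≤ t ∧ s ≤ lambdaH H Ω u t}, t ≤ maxcl Ω u := by
    rintro t ⟨h0, h1⟩
    by_contra hc
    push Not at hc
    rw [S.lambda_zero hH hM hc.le] at h1
    linarith
  have hsub : Ioo 0 (maxcl Ω u) ⊆ {t : ℝ | 0 ≤ t ∧ s ≤ lambdaH H Ω u t} := fun t ht =>
    ⟨ht.1.le, (h t ht).le⟩
  apply le_antisymm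
  · exact csSup_le ((nonempty_Ioo.2 hM).mono hsub) hub
  · have := csSup_le_csSup ⟨_, hub⟩ (nonempty_Ioo.2 hM) hsub
    rwa [csSup_Ioo hM] at this

lemma lambda_cont (S : Setup Ω u) (hH : IsAnisoNorm H) :
    ContinuousOn (lambdaH H Ω u) (Ioo 0 (maxcl Ω u)) :=
  (S.lambda_concave hH).continuousOn isOpen_Ioo

lemma lambda_inj (S : Setup Ω u) (hH : IsAnisoNorm H) : InjOn (lambdaH H Ω u) (Ioo 0 (maxcl Ω u)) := by
  intro a ha b hb hab
  rw [← S.diamond_lambda hH ha, hab, S.diamond_lambda hH hb]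

/-- good heights -/
def good (H : E2 → ℝ) (Ω : Set E2) (u : E2 → ℝ) : Set ℝ :=
  {t ∈ Ioo 0 (maxcl Ω u) | DifferentiableAt ℝ (lambdaH H Ω u) t}

lemma good_meas : MeasurableSet (good H Ω u) :=
  measurableSet_Ioo.inter (measurableSet_of_differentiableAt ℝ _)

lemma deriv_zero_of_const {f : ℝ → ℝ} {s c : ℝ} {U : Set ℝ} (hU : IsOpen U) (hs : s ∈ U)
    (h : ∀ y ∈ U, f y = c) : deriv f s = 0 := by
  have : f =ᶠ[nhds s] fun _ => c := by
    filter_upwards [hU.mem_nhds hs] with y hy using h y hy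
  rw [this.deriv_eq]; simp

lemma good_of_ne (S : Setup Ω u) (hH : IsAnisoNorm H) {t : ℝ} (ht : t ∈ Ioo 0 (maxcl Ω u))
    (hd : deriv (diamondRe H Ω u) (lambdaH H Ω u t) ≠ 0) :
    HasDerivAt (lambdaH H Ω u) (deriv (diamondRe H Ω u) (lambdaH H Ω u t))⁻¹ t := by
  have hdiff : DifferentiableAt ℝ (diamondRe H Ω u) (lambdaH H Ω u t) := by
    by_contra hc; exact hd (deriv_zero_of_not_differentiableAt hc)
  refine HasDerivAt.of_local_left_inverse ((S.lambda_cont hH).continuousAt (isOpen_Ioo.mem_nhds ht))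
    hdiff.hasDerivAt hd ?_
  filter_upwards [isOpen_Ioo.mem_nhds ht] with y hy using S.diamond_lambda hH hy

lemma deriv_ae (S : Setup Ω u) (hH : IsAnisoNorm H) (hM : 0 < maxcl Ω u) :
    ∀ᵐ s : ℝ, 0 < s → s ∉ lambdaH H Ω u '' good H Ω u → deriv (diamondRe H Ω u) s = 0 := by
  set I := Ioo 0 (maxcl Ω u) with hI
  set B1 : Set ℝ := {s | 0 < s ∧ ∀ t ∈ I, lambdaH H Ω u t < s} with hB1
  set B2 : Set ℝ := {s | 0 < s ∧ ∀ t ∈ I, s < lambdaH H Ω u t} with hB2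
  have hN1 : ({s | s ∈ B1 ∧ ∀ s' ∈ B1, s ≤ s'} : Set ℝ).Subsingleton := fun a ha b hb =>
    le_antisymm (ha.2 b hb.1) (hb.2 a ha.1)
  have hN2 : ({s | s ∈ B2 ∧ ∀ s' ∈ B2, s' ≤ s} : Set ℝ).Subsingleton := fun a ha b hb =>
    le_antisymm (hb.2 a ha.1) (ha.2 b hb.1)
  have h1 := measure_eq_zero_iff_ae_notMem.1 (hN1.measure_zero (volume : Measure ℝ))
  have h2 := measure_eq_zero_iff_ae_notMem.1 (hN2.measure_zero (volume : Measure ℝ))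
  filter_upwards [h1, h2] with s hs1 hs2 hs hsA
  by_cases hJ : s ∈ lambdaH H Ω u '' I
  · obtain ⟨t, ht, rfl⟩ := hJ
    by_contra hne
    exact hsA ⟨t, ⟨ht, (S.good_of_ne hH ht hne).differentiableAt⟩, rfl⟩
  have hconn : IsPreconnected (lambdaH H Ω u '' I) :=
    isPreconnected_Ioo.image _ (S.lambda_cont hH)
  have hz1 : ∀ y, y ∈ B1 → diamondRe H Ω u y = 0 := by
    intro y hy
    apply diamond_zero
    intro t ht
    rcases lt_or_ge t (maxcl Ω u) with h | h
    · exact hy.2 t ⟨ht, h⟩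
    · rw [S.lambda_zero hH hM h]; exact hy.1
  have hcase : s ∈ B1 ∨ s ∈ B2 := by
    by_contra hc
    push Not at hc
    obtain ⟨hc1, hc2⟩ := hc
    have e1 : ∃ t ∈ I, s ≤ lambdaH H Ω u t := by
      by_contra h; push Not at h; exact hc1 ⟨hs, h⟩
    have e2 : ∃ t ∈ I, lambdaH H Ω u t ≤ s := by
      by_contra h; push Not at h; exact hc2 ⟨hs, h⟩
    obtain ⟨a, ha, ha'⟩ := e1
    obtain ⟨b, hb, hb'⟩ := e2
    exact hJ (hconn.ordConnected.out ⟨b, hb, rfl⟩ ⟨a, ha, rfl⟩ ⟨hb', ha'⟩)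
  rcases hcase with hB | hB
  · have : ∃ s' ∈ B1, s' < s := by
      by_contra h; push Not at h; exact hs1 ⟨hB, h⟩
    obtain ⟨s', hs', hlt⟩ := this
    refine deriv_zero_of_const (isOpen_Ioi (a := s')) hlt (c := 0) ?_
    intro y hy
    exact hz1 y ⟨hs'.1.trans hy, fun t ht => (hs'.2 t ht).trans hy⟩
  · have : ∃ s' ∈ B2, s < s' := by
      by_contra h; push Not at h; exact hs2 ⟨hB, h⟩
    obtain ⟨s', hs', hlt⟩ := this
    refine deriv_zero_of_const (isOpen_Ioo (a := 0) (b := s')) ⟨hs, hlt⟩ (c := maxcl Ω u) ?_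
    intro y hy
    exact S.diamond_max hH hM hy.1 (fun t ht => hy.2.trans (hs'.2 t ht))

lemma mass_ge_deriv (S : Setup Ω u) (hH : IsAnisoNorm H) {t l : ℝ} (ht : t ∈ Ioo 0 (maxcl Ω u))
    (hl : HasDerivAt (lambdaH H Ω u) l t) (hl0 : l ≠ 0) :
    ENNReal.ofReal (4 * kap H ^ 3 / l ^ 2) ≤ mass H Ω u t := by
  have hsl := (hasDerivAt_iff_tendsto_slope.1 hl).mono_left
    (nhdsWithin_mono t (fun y (hy : y ∈ Ioi t) => ne_of_gt hy))
  have hlim : Filter.Tendsto (fun t' => ENNReal.ofReal (4 * kap H ^ 3 / (slope (lambdaH H Ω u) t t') ^ 2))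
      (nhdsWithin t (Ioi t)) (nhds (ENNReal.ofReal (4 * kap H ^ 3 / l ^ 2))) := by
    refine (ENNReal.continuous_ofReal.tendsto _).comp ?_
    exact Filter.Tendsto.div tendsto_const_nhds (hsl.pow 2) (pow_ne_zero 2 hl0)
  refine le_of_tendsto hlim ?_
  filter_upwards [self_mem_nhdsWithin, nhdsWithin_le_nhds (isOpen_Iio.mem_nhds ht.2)] with t' h1 h2
  have h1' : t < t' := h1
  refine le_trans (le_of_eq ?_) (S.mass_ge hH ht.1 h1' h2)
  congr 1
  rw [slope_def_field, div_pow, div_div_eq_mul_div]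
  congr 1
  ring

lemma layer (S : Setup Ω u) (hH : IsAnisoNorm H) :
    ∫⁻ t in Ioo 0 (maxcl Ω u), mass H Ω u t ≤ ∫⁻ x in Ω, ENNReal.ofReal (u x * detH H u x) := by
  have hV : IsOpen {p : ℝ × E2 | p.2 ∈ Eu Ω u ∧ p.1 < u p.2} := by
    have hc : ContinuousOn (fun p : ℝ × E2 => u p.2 - p.1) (Prod.snd ⁻¹' Eu Ω u) :=
      ((S.cont.mono (fun x (hx : x ∈ Eu Ω u) => subset_closure hx.1)).comp continuousOn_snd
        (fun p hp => hp)).sub continuousOn_fst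
    have := hc.isOpen_inter_preimage (S.Eu_open.preimage continuous_snd) isOpen_Ioi (t := Ioi 0)
    convert this using 1
    ext p
    simp
  have hm : ∀ t, mass H Ω u t = ∫⁻ x, {p : ℝ × E2 | p.2 ∈ Eu Ω u ∧ p.1 < u p.2}.indicator
      (fun p => ENNReal.ofReal (detH H u p.2)) (t, x) := by
    intro t
    rw [mass, ← lintegral_indicator (S.superE_open t).measurableSet]
    rfl
  simp_rw [hm]
  rw [lintegral_lintegral_swap]
  · have hE : ∫⁻ x in Eu Ω u, ENNReal.ofReal (u x * detH H u x) ≤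
        ∫⁻ x in Ω, ENNReal.ofReal (u x * detH H u x) := lintegral_mono_set (fun x hx => hx.1)
    refine le_trans ?_ hE
    rw [← lintegral_indicator S.Eu_open.measurableSet]
    apply lintegral_mono
    intro x
    by_cases hx : x ∈ Eu Ω u
    · rw [indicator_of_mem hx]
      calc _ ≤ ∫⁻ t in Ioo 0 (maxcl Ω u), (Iio (u x)).indicator
            (fun _ => ENNReal.ofReal (detH H u x)) t := by
            apply lintegral_mono
            intro t
            simp only [indicator]
            split_ifs with h1 h2
            · exact le_rfl
            · exact absurd h1.2 h2
            · simp
            · simp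
        _ = ENNReal.ofReal (detH H u x) * volume (Iio (u x) ∩ Ioo 0 (maxcl Ω u)) := by
            rw [lintegral_indicator measurableSet_Iio, Measure.restrict_restrict measurableSet_Iio,
              setLIntegral_const]
        _ ≤ ENNReal.ofReal (detH H u x) * volume (Ioo 0 (u x)) := by
            gcongr
            intro t ht
            exact ⟨ht.2.1, ht.1⟩
        _ = ENNReal.ofReal (u x * detH H u x) := by
            rw [Real.volume_Ioo, sub_zero, ← ENNReal.ofReal_mul (S.detH_nonneg hH hx), mul_comm]
    · rw [indicator_of_notMem hx]
      apply le_of_eq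
      have : ∀ t : ℝ, {p : ℝ × E2 | p.2 ∈ Eu Ω u ∧ p.1 < u p.2}.indicator
        (fun p => ENNReal.ofReal (detH H u p.2)) (t, x) = 0 := fun t =>
          indicator_of_notMem (fun h => hx h.1) _
      simp [this]
  · exact (((measurable_detH H u).comp measurable_snd).ennreal_ofReal.indicator
      hV.measurableSet).aemeasurable

lemma final_lintegral (S : Setup Ω u) (hH : IsAnisoNorm H) (hM : 0 < maxcl Ω u) :
    ENNReal.ofReal (4 * kap H ^ 3) *
      ∫⁻ s in Ioi (0 : ℝ), ENNReal.ofReal (|deriv (diamondRe H Ω u) s| ^ 3) ≤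
      ∫⁻ x in Ω, ENNReal.ofReal (u x * detH H u x) := by
  refine le_trans ?_ (S.layer hH)
  have hinj : InjOn (lambdaH H Ω u) (good H Ω u) := (S.lambda_inj hH).mono (fun t ht => ht.1)
  have hGm : MeasurableSet (lambdaH H Ω u '' good H Ω u) :=
    good_meas.image_of_continuousOn_injOn ((S.lambda_cont hH).mono (fun t ht => ht.1)) hinj
  have hk := kap_nonneg hH
  have h1 : ∫⁻ s in Ioi (0 : ℝ), ENNReal.ofReal (|deriv (diamondRe H Ω u) s| ^ 3) ≤
      ∫⁻ s in lambdaH H Ω u '' good H Ω u, ENNReal.ofReal (|deriv (diamondRe H Ω u) s| ^ 3) := by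
    rw [← lintegral_indicator hGm, ← lintegral_indicator measurableSet_Ioi]
    apply lintegral_mono_ae
    filter_upwards [S.deriv_ae hH hM] with s hs
    by_cases h0 : s ∈ Ioi (0 : ℝ)
    · by_cases hA : s ∈ lambdaH H Ω u '' good H Ω u
      · rw [indicator_of_mem h0, indicator_of_mem hA]
      · rw [indicator_of_mem h0, indicator_of_notMem hA, hs h0 hA]; simp
    · rw [indicator_of_notMem h0]; exact zero_le
  have h2 := lintegral_image_eq_lintegral_abs_deriv_mul good_meas
    (fun t (ht : t ∈ good H Ω u) => ht.2.hasDerivAt.hasDerivWithinAt) hinj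
    (fun s => ENNReal.ofReal (|deriv (diamondRe H Ω u) s| ^ 3))
  rw [h2] at h1
  calc _ ≤ ENNReal.ofReal (4 * kap H ^ 3) * ∫⁻ t in good H Ω u,
        ENNReal.ofReal |deriv (lambdaH H Ω u) t| *
          ENNReal.ofReal (|deriv (diamondRe H Ω u) (lambdaH H Ω u t)| ^ 3) := by gcongr
    _ = ∫⁻ t in good H Ω u, ENNReal.ofReal (4 * kap H ^ 3) *
        (ENNReal.ofReal |deriv (lambdaH H Ω u) t| *
          ENNReal.ofReal (|deriv (diamondRe H Ω u) (lambdaH H Ω u t)| ^ 3)) := by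
        rw [lintegral_const_mul' _ _ ENNReal.ofReal_ne_top]
    _ ≤ ∫⁻ t in good H Ω u, mass H Ω u t := by
        apply setLIntegral_mono' good_meas
        intro t ht
        by_cases hd : deriv (diamondRe H Ω u) (lambdaH H Ω u t) = 0
        · rw [hd]; simp
        · have hder := S.good_of_ne hH ht.1 hd
          set d := deriv (diamondRe H Ω u) (lambdaH H Ω u t) with hd'
          refine le_trans (le_of_eq ?_) (S.mass_ge_deriv hH ht.1 hder (inv_ne_zero hd))
          rw [hder.deriv, ← ENNReal.ofReal_mul (abs_nonneg _), ← ENNReal.ofReal_mul (by positivity)]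
          congr 1
          have h3 : |d| ≠ 0 := abs_ne_zero.2 hd
          rw [abs_inv, ← sq_abs d⁻¹, abs_inv]
          field_simp
    _ ≤ _ := lintegral_mono_set (fun t ht => ht.1)

end Setup

/-- Pólya–Szegő inequality for anisotropic Hessian integrals:
`I_H[u,Ω] ≥ I_H[u^★,Ω^★]`, i.e.
`∫_Ω u det_H[u] dx ≥ 4κ³ ∫₀^{P_H(Ω)} |(u^♦)'(s)|³ ds`. -/
theorem aniso_polya_szego
    (H : E2 → ℝ) (hH : IsAnisoNorm H)
    (Ω : Set E2) (hΩo : IsOpen Ω) (hΩb : Bornology.IsBounded Ω) (hΩc : Convex ℝ Ω)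
    (hΩbd : HasC2Boundary Ω)
    (u : E2 → ℝ) (hu : MemPhi0 Ω u) (hu2 : ContDiffOn ℝ 2 u (Eu Ω u)) :
    ∫ x in Ω, u x * detH H u x
      ≥ 4 * kappa H ^ 3 * ∫ s in (0 : ℝ)..(PerH H Ω u), |deriv (diamondRe H Ω u) s| ^ 3 := by
  have S : Setup Ω u := ⟨hΩo, hΩb, hΩc, hu, hu2⟩
  have hP : 0 ≤ PerH H Ω u := Setup.lambda_nonneg hH Ω u 0
  have hk0 : 0 ≤ kappa H := ENNReal.toReal_nonneg
  have hL : 0 ≤ ∫ x in Ω, u x * detH H u x := integral_nonneg_of_ae (S.udetH_nonneg hH)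
  rw [intervalIntegral.integral_of_le hP]
  rcases le_or_gt (maxcl Ω u) 0 with hM | hM
  · have h0 : ∀ s ∈ Ioi (0:ℝ), diamondRe H Ω u s = 0 := by
      intro s hs
      apply Setup.diamond_zero
      intro t ht
      rw [S.lambda_zero_of_gt (lt_of_le_of_lt hM ht)]
      exact hs
    have h1 : ∫ s in Ioc (0:ℝ) (PerH H Ω u), |deriv (diamondRe H Ω u) s| ^ 3 = 0 := by
      apply setIntegral_eq_zero_of_forall_eq_zero
      intro s hs
      rw [Setup.deriv_zero_of_const isOpen_Ioi (show s ∈ Ioi (0:ℝ) from hs.1) h0]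
      simp
    rw [h1, mul_zero]
    exact hL
  · have hm := S.final_lintegral hH hM
    rw [← ofReal_integral_eq_lintegral_ofReal (S.integrable hH) (S.udetH_nonneg hH)] at hm
    rw [integral_eq_lintegral_of_nonneg_ae (Filter.Eventually.of_forall fun s => by
        show 0 ≤ |deriv (diamondRe H Ω u) s| ^ 3
        positivity)
      (((measurable_deriv _).abs.pow_const 3).aestronglyMeasurable)]
    have h2 : ENNReal.ofReal (4 * kappa H ^ 3) *
        ∫⁻ s in Ioc (0:ℝ) (PerH H Ω u), ENNReal.ofReal (|deriv (diamondRe H Ω u) s| ^ 3)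
        ≤ ENNReal.ofReal (∫ x in Ω, u x * detH H u x) := by
      refine le_trans ?_ hm
      apply mul_le_mul' (ENNReal.ofReal_le_ofReal ?_) (lintegral_mono_set Ioc_subset_Ioi_self)
      have := pow_le_pow_left₀ hk0 (kappa_le hH) 3
      linarith
    have h3 := ENNReal.toReal_mono ENNReal.ofReal_ne_top h2
    rw [ENNReal.toReal_mul, ENNReal.toReal_ofReal (by positivity), ENNReal.toReal_ofReal hL] at h3
    exact h3
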